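/- arXiv:1812.09637 — 3 statements merged into one kernel-verified Lean document; each statement's English description precedes it below -/
import Mathlib

section
/- Given the setup (Ω, 𝓕, P, F, W), if I and J are both stochastic integral mappings from L² to C, then for every b ∈ L² the processes I(b) and J(b) are indistinguishable. -/
/-!
The value of a stochastic integral mapping is prescribed on simple processes and passes to limits in
probability, so uniqueness at a fixed time amounts to approximating every `b ∈ L²` by simple
processes in `H²`; continuity of the paths then turns equality at each time of a countable dense set
into indistinguishability.

A measurable adapted process need not be progressively measurable, so its time averages need not
be adapted; it is sampled instead, at the last point of a grid `a + hℤ` strictly before the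
current time. If the offset `a` is uniform on `(0, h]`, then at every time `s` the elapsed time
`r` since the last grid point is uniform on `(0, h]` too. Hence the mean square sampling error
averaged over `a` equals the mean square translation error `f s - f (s - r)` averaged over `r`,
which is small with `h` by continuity of translations in `L²(ℝ)`, and some offset does at least as
well as the average. This settles `f ∈ H²`; a general `b ∈ L²` is first truncated.
-/

open MeasureTheory Filter Set

variable {Ω : Type*} {mΩ : MeasurableSpace Ω}

/-- The filtration is augmented: each `F t` contains all `P`-null sets. -/
def AugmentedFiltration (P : Measure Ω) (F : Filtration ℝ mΩ) : Prop :=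
  ∀ t : ℝ, ∀ s : Set Ω, MeasurableSet s → P s = 0 → MeasurableSet[F t] s

/-- `W` is a standard Wiener process with respect to the filtration `F` under `P`. -/
def IsWienerProcess (P : Measure Ω) (F : Filtration ℝ mΩ) (W : ℝ → Ω → ℝ) : Prop :=
  (∀ ω, Continuous fun t => W t ω) ∧
  (∀ ω, W 0 ω = 0) ∧
  Adapted F W ∧
  ∀ s t : ℝ, 0 ≤ s → s ≤ t →
    ProbabilityTheory.Indep
      (MeasurableSpace.comap (fun ω => W t ω - W s ω) inferInstance) (F s) P ∧
    Measure.map (fun ω => W t ω - W s ω) P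
      = ProbabilityTheory.gaussianReal 0 (Real.toNNReal (t - s))

/-- `b` is a simple process with grid `0 = t 0 < t 1 < ⋯ < t n`. -/
def IsSimpleWith (F : Filtration ℝ mΩ) (b : ℝ → Ω → ℝ) (n : ℕ) (t : ℕ → ℝ) : Prop :=
  t 0 = 0 ∧ (∀ i < n, t i < t (i + 1)) ∧
  Measurable[F 0] (b 0) ∧
  (∀ i < n, Measurable[F (t i)] (b (t (i + 1)))) ∧
  ∀ s ω, b s ω =
    Set.indicator ({0} : Set ℝ) (fun _ => b 0 ω) s +
      ∑ i ∈ Finset.range n,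
        Set.indicator (Set.Ioc (t i) (t (i + 1))) (fun _ => b (t (i + 1)) ω) s

/-- `b` is a simple process. -/
def IsSimpleProcess (F : Filtration ℝ mΩ) (b : ℝ → Ω → ℝ) : Prop :=
  ∃ n t, IsSimpleWith F b n t

/-- `b ∈ L²`: measurable, adapted, and pathwise locally square integrable a.s. -/
def MemL2 (P : Measure Ω) (F : Filtration ℝ mΩ) (b : ℝ → Ω → ℝ) : Prop :=
  Measurable (Function.uncurry b) ∧ Adapted F b ∧
  ∀ t : ℝ, 0 ≤ t →
    ∀ᵐ ω ∂P, (∫⁻ s in Set.Ioc (0 : ℝ) t, ENNReal.ofReal ((b s ω) ^ 2)) < ⊤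

/-- `b ∈ H²`: measurable, adapted, locally square integrable in expectation. -/
def MemH2 (P : Measure Ω) (F : Filtration ℝ mΩ) (b : ℝ → Ω → ℝ) : Prop :=
  Measurable (Function.uncurry b) ∧ Adapted F b ∧
  ∀ t : ℝ, 0 ≤ t →
    (∫⁻ ω, ∫⁻ s in Set.Ioc (0 : ℝ) t, ENNReal.ofReal ((b s ω) ^ 2) ∂volume ∂P) < ⊤

/-- Elementary stochastic integral `∑ b(tᵢ)(W(tᵢ) − W(tᵢ₋₁))` of a simple process. -/
def ElemInt (W : ℝ → Ω → ℝ) (b : ℝ → Ω → ℝ) (n : ℕ) (t : ℕ → ℝ) (ω : Ω) : ℝ :=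
  ∑ i ∈ Finset.range n, b (t (i + 1)) ω * (W (t (i + 1)) ω - W (t i) ω)

/-- `I` is a stochastic integral mapping: it sends `L²` into the adapted continuous
processes, computes integrals of simple processes by the elementary formula, and is
continuous with respect to convergence in probability of the time integrals. -/
def IsStochasticIntegralMap (P : Measure Ω) (F : Filtration ℝ mΩ) (W : ℝ → Ω → ℝ)
    (I : (ℝ → Ω → ℝ) → ℝ → Ω → ℝ) : Prop :=
  (∀ b, MemL2 P F b → Adapted F (I b) ∧ ∀ ω, Continuous fun s => I b s ω) ∧
  (∀ b n t, MemL2 P F b → IsSimpleWith F b n t → ∀ u : ℝ, t n ≤ u →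
      ∀ᵐ ω ∂P, I b u ω = ElemInt W b n t ω) ∧
  (∀ u : ℝ, 0 ≤ u → ∀ b, MemL2 P F b → ∀ bs : ℕ → ℝ → Ω → ℝ,
      (∀ k, IsSimpleProcess F (bs k) ∧ MemH2 P F (bs k)) →
      TendstoInMeasure P
        (fun k ω => ∫ s in Set.Ioc (0 : ℝ) u, (b s ω - bs k s ω) ^ 2) atTop
        (fun _ => (0 : ℝ)) →
      TendstoInMeasure P (fun k ω => I (bs k) u ω) atTop (fun ω => I b u ω))

open ProbabilityTheory
open scoped Topology ENNReal

section Analysis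

lemma eLpNorm_two_sq_eq_lintegral {α : Type*} [MeasurableSpace α] {μ : Measure α} (φ : α → ℝ) :
    eLpNorm φ 2 μ ^ 2 = ∫⁻ x, ENNReal.ofReal (φ x ^ 2) ∂μ := by
  have h := eLpNorm_nnreal_pow_eq_lintegral (μ := μ) (f := φ) (p := 2) two_ne_zero
  simp only [NNReal.coe_ofNat, ENNReal.coe_ofNat, ENNReal.rpow_ofNat] at h
  rw [h]
  refine lintegral_congr fun x => ?_
  rw [← ofReal_norm, ← ENNReal.ofReal_pow (norm_nonneg _), Real.norm_eq_abs, sq_abs]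

lemma lintegral_sq_sub_le {α : Type*} [MeasurableSpace α] {μ : Measure α} {φ ψ : α → ℝ}
    (hφ : Measurable φ) (hψ : Measurable ψ) (χ : α → ℝ) :
    ∫⁻ x, ENNReal.ofReal ((φ x - χ x) ^ 2) ∂μ ≤
      2 * ∫⁻ x, ENNReal.ofReal ((φ x - ψ x) ^ 2) ∂μ +
        2 * ∫⁻ x, ENNReal.ofReal ((ψ x - χ x) ^ 2) ∂μ := by
  rw [← lintegral_const_mul' _ _ ENNReal.ofNat_ne_top,
    ← lintegral_const_mul' _ _ ENNReal.ofNat_ne_top, ← lintegral_add_left (by fun_prop)]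
  refine lintegral_mono fun x => ?_
  rw [← ENNReal.ofReal_ofNat 2, ← ENNReal.ofReal_mul zero_le_two, ← ENNReal.ofReal_mul zero_le_two,
    ← ENNReal.ofReal_add (by positivity) (by positivity)]
  refine ENNReal.ofReal_le_ofReal ?_
  have h := add_sq_le (a := φ x - ψ x) (b := ψ x - χ x)
  rwa [sub_add_sub_cancel, mul_add] at h

lemma tendsto_integral_sq_of_tendsto_lintegral {α ι : Type*} [MeasurableSpace α] {μ : Measure α}
    {l : Filter ι} {φ : ι → α → ℝ} (hφ : ∀ i, AEStronglyMeasurable (φ i) μ)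
    (h : Tendsto (fun i => ∫⁻ x, ENNReal.ofReal (φ i x ^ 2) ∂μ) l (𝓝 0)) :
    Tendsto (fun i => ∫ x, φ i x ^ 2 ∂μ) l (𝓝 0) := by
  refine ((ENNReal.tendsto_toReal ENNReal.zero_ne_top).comp h).congr fun i => ?_
  exact (integral_eq_lintegral_of_nonneg_ae (ae_of_all μ fun x => sq_nonneg _)
    ((hφ i).pow 2)).symm

lemma tendsto_eLpNorm_vadd_sub {M X E : Type*} [TopologicalSpace X] [R1Space X]
    [MeasurableSpace X] [BorelSpace X] [AddMonoid M] [TopologicalSpace M] [MeasurableSpace M]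
    [OpensMeasurableSpace M] [AddAction M X] [ContinuousVAdd M X] [NormedAddCommGroup E]
    {μ : Measure X} [IsLocallyFiniteMeasure μ] [μ.InnerRegularCompactLTTop]
    [VAddInvariantMeasure M X μ] {p : ℝ≥0∞} [Fact (1 ≤ p)] (hp : p ≠ ∞) {φ : X → E}
    (hφ : MemLp φ p μ) :
    Tendsto (fun c : M => eLpNorm (fun x => φ (c +ᵥ x) - φ x) p μ) (𝓝 0) (𝓝 0) := by
  have : Fact (p ≠ ∞) := ⟨hp⟩
  have h : Continuous fun c : M => DomAddAct.mk c +ᵥ hφ.toLp φ :=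
    DomAddAct.continuous_mk.vadd continuous_const
  have h0 := h.tendsto 0
  simp only [DomAddAct.mk_zero, zero_vadd, DomAddAct.mk_vadd_toLp] at h0
  rwa [Lp.tendsto_Lp_iff_tendsto_eLpNorm''] at h0

lemma ae_tendsto_zero_of_tsum_lintegral_ne_top {α : Type*} [MeasurableSpace α] {μ : Measure α}
    {f : ℕ → α → ℝ≥0∞} (hf : ∀ n, Measurable (f n)) (hsum : ∑' n, ∫⁻ x, f n x ∂μ ≠ ∞) :
    ∀ᵐ x ∂μ, Tendsto (fun n => f n x) atTop (𝓝 0) := by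
  rw [← lintegral_tsum fun n => (hf n).aemeasurable] at hsum
  filter_upwards [ae_lt_top (Measurable.tsum hf) hsum] with x hx
  exact ENNReal.tendsto_atTop_zero_of_tsum_ne_top hx.ne

lemma ae_forall_mem_closure_eq_of_continuous {α T E : Type*} [MeasurableSpace α] {μ : Measure α}
    [TopologicalSpace T] [TopologicalSpace.PseudoMetrizableSpace T] [TopologicalSpace E]
    [T2Space E] {X Y : T → α → E} {S : Set T} (hS : TopologicalSpace.IsSeparable S)
    (hX : ∀ᵐ x ∂μ, Continuous fun t => X t x) (hY : ∀ᵐ x ∂μ, Continuous fun t => Y t x)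
    (h : ∀ t ∈ S, X t =ᵐ[μ] Y t) :
    ∀ᵐ x ∂μ, ∀ t ∈ closure S, X t x = Y t x := by
  obtain ⟨D, hDS, hD, hSD⟩ := hS.exists_countable_dense_subset
  filter_upwards [hX, hY, (ae_ball_iff hD).2 fun t ht => h t (hDS ht)] with x hXx hYx hx t ht
  exact EqOn.closure hx hXx hYx (closure_minimal hSD isClosed_closure ht)

end Analysis

section Truncation

variable {α : Type*} {mα : MeasurableSpace α} {μ : Measure α} {φ : α → ℝ}

lemma measurable_truncation (hφ : Measurable φ) (A : ℝ) : Measurable (truncation φ A) :=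
  (measurable_id.indicator measurableSet_Ioc).comp hφ

lemma sq_sub_truncation_le (φ : α → ℝ) (A : ℝ) (x : α) :
    (φ x - truncation φ A x) ^ 2 ≤ φ x ^ 2 := by
  by_cases hx : φ x ∈ Ioc (-A) A <;> simp [truncation, hx, sq_nonneg]

lemma tendsto_lintegral_sq_sub_truncation (hφ : Measurable φ)
    (hfin : ∫⁻ x, ENNReal.ofReal (φ x ^ 2) ∂μ ≠ ∞) :
    Tendsto (fun A : ℝ => ∫⁻ x, ENNReal.ofReal ((φ x - truncation φ A x) ^ 2) ∂μ) atTop (𝓝 0) := by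
  have hlim (x : α) :
      Tendsto (fun A : ℝ => ENNReal.ofReal ((φ x - truncation φ A x) ^ 2)) atTop (𝓝 0) := by
    refine tendsto_const_nhds.congr' ?_
    filter_upwards [eventually_gt_atTop |φ x|] with A hA
    simp [truncation_eq_self hA]
  simpa using tendsto_lintegral_filter_of_dominated_convergence
    (fun x => ENNReal.ofReal (φ x ^ 2))
    (Eventually.of_forall fun A =>
      ((hφ.sub (measurable_truncation hφ A)).pow_const 2).ennreal_ofReal)
    (Eventually.of_forall fun A =>
      ae_of_all μ fun x => ENNReal.ofReal_le_ofReal (sq_sub_truncation_le φ A x))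
    hfin (ae_of_all μ hlim)

lemma tendsto_integral_sq_sub_of_tendsto_truncation {ι : Type*} {l : Filter ι} {A : ι → ℝ}
    {ψ : ι → α → ℝ} (hφ : Measurable φ) (hψ : ∀ i, Measurable (ψ i)) (hA : Tendsto A l atTop)
    (hfin : ∫⁻ x, ENNReal.ofReal (φ x ^ 2) ∂μ ≠ ∞)
    (h : Tendsto (fun i => ∫⁻ x, ENNReal.ofReal ((ψ i x - truncation φ (A i) x) ^ 2) ∂μ) l (𝓝 0)) :
    Tendsto (fun i => ∫ x, (φ x - ψ i x) ^ 2 ∂μ) l (𝓝 0) := by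
  have hsum := (ENNReal.Tendsto.const_mul (a := 2)
      ((tendsto_lintegral_sq_sub_truncation hφ hfin).comp hA) (by simp)).add
    (ENNReal.Tendsto.const_mul (a := 2) h (by simp))
  rw [mul_zero, add_zero] at hsum
  refine tendsto_integral_sq_of_tendsto_lintegral
    (fun i => (hφ.sub (hψ i)).aestronglyMeasurable)
    (tendsto_of_tendsto_of_tendsto_of_le_of_le tendsto_const_nhds hsum (fun _ => zero_le)
      fun i => ?_)
  have hle := lintegral_sq_sub_le (μ := μ) hφ (measurable_truncation hφ (A i)) (ψ i)
  simp_rw [sub_sq_comm (truncation _ _ _) (ψ _ _)] at hle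
  exact hle

end Truncation

section GridPhase

variable {h : ℝ} (hh : 0 < h)

lemma measurable_toIocMod (a : ℝ) : Measurable (toIocMod hh a) := by
  have : Fact (0 < h) := ⟨hh⟩
  exact measurable_subtype_coe.comp
    ((AddCircle.measurableEquivIoc h a).measurable.comp AddCircle.measurable_mk')

/-- By invariance of Haar measure on the circle `ℝ / hℤ` under `a ↦ s - a`. -/
lemma lintegral_toIocMod_sub (s : ℝ) (G : ℝ → ℝ≥0∞) :
    ∫⁻ a in Ioc 0 h, G (toIocMod hh 0 (s - a)) = ∫⁻ r in Ioc 0 h, G r := by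
  have : Fact (0 < h) := ⟨hh⟩
  let G' : AddCircle h → ℝ≥0∞ := fun b => G (AddCircle.equivIoc h 0 b)
  have hG' (x : ℝ) : G' x = G (toIocMod hh 0 x) := rfl
  calc ∫⁻ a in Ioc 0 h, G (toIocMod hh 0 (s - a))
      = ∫⁻ a in Ioc 0 (0 + h), G' (s - a) := by
        simp only [zero_add, ← AddCircle.coe_sub, hG']
    _ = ∫⁻ b : AddCircle h, G' (s - b) := AddCircle.lintegral_preimage h 0 fun b => G' (s - b)
    _ = ∫⁻ b : AddCircle h, G' b := lintegral_sub_left_eq_self G' _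
    _ = ∫⁻ r in Ioc 0 (0 + h), G' r := (AddCircle.lintegral_preimage h 0 G').symm
    _ = ∫⁻ r in Ioc 0 h, G r := by
        rw [zero_add]
        refine setLIntegral_congr_fun measurableSet_Ioc fun r hr => ?_
        rw [hG', (toIocMod_eq_self hh).2 (by rwa [zero_add])]

lemma lintegral_lintegral_toIocMod_sub {ν : Measure ℝ} [SFinite ν] {G : ℝ → ℝ → ℝ≥0∞}
    (hG : Measurable (Function.uncurry G)) :
    ∫⁻ a in Ioc 0 h, ∫⁻ s, G s (toIocMod hh 0 (s - a)) ∂ν =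
      ∫⁻ r in Ioc 0 h, ∫⁻ s, G s r ∂ν := by
  have hmod := measurable_toIocMod hh 0
  rw [lintegral_lintegral_swap (by fun_prop)]
  simp only [lintegral_toIocMod_sub hh]
  exact lintegral_lintegral_swap (by fun_prop)

end GridPhase

section StochasticIntegral

variable {P : Measure Ω} {F : Filtration ℝ mΩ} {f g b : ℝ → Ω → ℝ}

section MeanSquare

lemma measurable_lintegral_sq (hf : Measurable (Function.uncurry f)) (ν : Measure ℝ) [SFinite ν] :
    Measurable fun ω => ∫⁻ s, ENNReal.ofReal (f s ω ^ 2) ∂ν :=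
  Measurable.lintegral_prod_right' (f := fun p : Ω × ℝ => ENNReal.ofReal (f p.2 p.1 ^ 2))
    (by fun_prop)

lemma MemH2.memL2 (hb : MemH2 P F b) : MemL2 P F b :=
  ⟨hb.1, hb.2.1, fun t ht => ae_lt_top (measurable_lintegral_sq hb.1 _) (hb.2.2 t ht).ne⟩

lemma memH2_of_abs_le [IsFiniteMeasure P] (hb : Measurable (Function.uncurry b))
    (hba : Adapted F b) {C : ℝ} (hC : ∀ s ω, |b s ω| ≤ C) : MemH2 P F b := by
  refine ⟨hb, hba, fun t _ => ?_⟩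
  calc ∫⁻ ω, ∫⁻ s in Ioc 0 t, ENNReal.ofReal (b s ω ^ 2) ∂volume ∂P
      ≤ ∫⁻ _, ∫⁻ _ in Ioc 0 t, ENNReal.ofReal (C ^ 2) ∂volume ∂P :=
        lintegral_mono fun ω => lintegral_mono fun s =>
          ENNReal.ofReal_le_ofReal (sq_le_sq.2 ((hC s ω).trans (le_abs_self C)))
    _ < ∞ := by simp [ENNReal.mul_lt_top]

lemma MemH2.of_lintegral_sq_sub_lt_top (hf : MemH2 P F f) (hg : Measurable (Function.uncurry g))
    (hga : Adapted F g)
    (hgf : ∀ t, 0 ≤ t →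
      ∫⁻ ω, ∫⁻ s in Ioc 0 t, ENNReal.ofReal ((g s ω - f s ω) ^ 2) ∂volume ∂P < ∞) :
    MemH2 P F g := by
  refine ⟨hg, hga, fun t ht => ?_⟩
  have hf_meas := hf.1
  calc ∫⁻ ω, ∫⁻ s in Ioc 0 t, ENNReal.ofReal (g s ω ^ 2) ∂volume ∂P
      ≤ ∫⁻ ω, ((2 * ∫⁻ s in Ioc 0 t, ENNReal.ofReal ((g s ω - f s ω) ^ 2)) +
          2 * ∫⁻ s in Ioc 0 t, ENNReal.ofReal (f s ω ^ 2)) ∂P := by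
        refine lintegral_mono fun ω => ?_
        simpa only [sub_zero] using lintegral_sq_sub_le (μ := volume.restrict (Ioc 0 t))
          (hg.of_uncurry_right (y := ω)) (hf_meas.of_uncurry_right (y := ω)) (fun _ => 0)
    _ = 2 * ∫⁻ ω, ∫⁻ s in Ioc 0 t, ENNReal.ofReal ((g s ω - f s ω) ^ 2) ∂volume ∂P +
          2 * ∫⁻ ω, ∫⁻ s in Ioc 0 t, ENNReal.ofReal (f s ω ^ 2) ∂volume ∂P := by
        rw [lintegral_add_right _ ((measurable_lintegral_sq hf_meas _).const_mul 2),
          lintegral_const_mul' _ _ ENNReal.ofNat_ne_top,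
          lintegral_const_mul' _ _ ENNReal.ofNat_ne_top]
    _ < ∞ := ENNReal.add_lt_top.2 ⟨ENNReal.mul_lt_top ENNReal.ofNat_lt_top (hgf t ht),
        ENNReal.mul_lt_top ENNReal.ofNat_lt_top (hf.2.2 t ht)⟩

lemma measurable_uncurry_indicator (hf : Measurable (Function.uncurry f)) {S : Set ℝ}
    (hS : MeasurableSet S) : Measurable (Function.uncurry (S.indicator f)) := by
  have h : Function.uncurry (S.indicator f) = (Prod.fst ⁻¹' S).indicator (Function.uncurry f) := by
    ext ⟨s, ω⟩
    by_cases hs : s ∈ S <;> simp [hs]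
  rw [h]
  exact hf.indicator (measurable_fst hS)

lemma adapted_indicator (hf : Adapted F f) (S : Set ℝ) : Adapted F (S.indicator f) := fun s => by
  by_cases hs : s ∈ S
  · simpa only [indicator_of_mem hs] using hf s
  · simpa only [indicator_of_notMem hs] using @measurable_zero _ _ _ (F s) _

lemma lintegral_sq_indicator (f : ℝ → Ω → ℝ) {S : Set ℝ} (hS : MeasurableSet S) (ν : Measure ℝ)
    (ω : Ω) :
    ∫⁻ s, ENNReal.ofReal (S.indicator f s ω ^ 2) ∂ν = ∫⁻ s in S, ENNReal.ofReal (f s ω ^ 2) ∂ν := by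
  rw [← lintegral_indicator hS]
  refine lintegral_congr fun s => ?_
  by_cases hs : s ∈ S <;> simp [hs]

lemma memH2_indicator (hf : MemH2 P F f) {S : Set ℝ} (hS : MeasurableSet S) :
    MemH2 P F (S.indicator f) := by
  refine ⟨measurable_uncurry_indicator hf.1 hS, adapted_indicator hf.2.1 S, fun t ht => ?_⟩
  refine (lintegral_mono fun ω => ?_).trans_lt (hf.2.2 t ht)
  rw [lintegral_sq_indicator f hS]
  exact lintegral_mono' (Measure.restrict_le_self) le_rfl

/-- Translations are `L²(ℝ)`-continuous along each path, and four times the squared norm of the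
path dominates. -/
lemma tendsto_lintegral_sq_sub_translate (hf : Measurable (Function.uncurry f))
    (hfin : ∫⁻ ω, ∫⁻ s, ENNReal.ofReal (f s ω ^ 2) ∂volume ∂P ≠ ∞) :
    Tendsto (fun r : ℝ => ∫⁻ ω, ∫⁻ s, ENNReal.ofReal ((f s ω - f (s - r) ω) ^ 2) ∂volume ∂P)
      (𝓝 0) (𝓝 0) := by
  have hbound (r : ℝ) (ω : Ω) : ∫⁻ s, ENNReal.ofReal ((f s ω - f (s - r) ω) ^ 2) ≤
      4 * ∫⁻ s, ENNReal.ofReal (f s ω ^ 2) := by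
    have h := lintegral_sq_sub_le (μ := volume) (φ := fun s => f s ω) (ψ := 0) (by fun_prop)
      measurable_zero (fun s => f (s - r) ω)
    simp only [Pi.zero_apply, sub_zero, zero_sub, neg_sq] at h
    rw [lintegral_sub_right_eq_self (fun s => ENNReal.ofReal (f s ω ^ 2)) r, ← add_mul] at h
    norm_num at h
    exact h
  have hpath : ∀ᵐ ω ∂P,
      Tendsto (fun r : ℝ => ∫⁻ s, ENNReal.ofReal ((f s ω - f (s - r) ω) ^ 2)) (𝓝 0) (𝓝 0) := by
    filter_upwards [ae_lt_top (measurable_lintegral_sq hf volume) hfin] with ω hω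
    have hLp : MemLp (fun s => f s ω) 2 volume := by
      refine ⟨Measurable.aestronglyMeasurable (by fun_prop), ?_⟩
      rwa [← eLpNorm_two_sq_eq_lintegral, ENNReal.pow_lt_top_iff, or_iff_left two_ne_zero] at hω
    have hneg : Tendsto (fun r : ℝ => -r) (𝓝 0) (𝓝 0) := by simpa using tendsto_neg (0 : ℝ)
    have h := ((ENNReal.continuous_pow 2).tendsto 0).comp
      ((tendsto_eLpNorm_vadd_sub ENNReal.ofNat_ne_top hLp).comp hneg)
    simpa [Function.comp_def, eLpNorm_two_sq_eq_lintegral, neg_add_eq_sub, sub_sq_comm] using h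
  simpa using tendsto_lintegral_filter_of_dominated_convergence
    (fun ω => 4 * ∫⁻ s, ENNReal.ofReal (f s ω ^ 2))
    (Eventually.of_forall fun r =>
      measurable_lintegral_sq (f := fun s ω => f s ω - f (s - r) ω) (by fun_prop) volume)
    (Eventually.of_forall fun r => ae_of_all P (hbound r))
    (by simpa [lintegral_const_mul' _ _ ENNReal.ofNat_ne_top] using
      ENNReal.mul_ne_top ENNReal.ofNat_ne_top hfin) hpath

end MeanSquare

section Sampling

variable {h : ℝ} (hh : 0 < h)

/-- The process `f` observed at the last time of the grid `a + hℤ` strictly before the current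
time, used to approximate `f` by simple processes. On the cell `(a + jh, a + (j + 1)h]` it is
constant, equal to `f (a + jh)`, because `toIocMod hh 0 (s - a) ∈ (0, h]` is the time elapsed since
the last grid point. -/
noncomputable def sampled (f : ℝ → Ω → ℝ) (a s : ℝ) (ω : Ω) : ℝ :=
  f (s - toIocMod hh 0 (s - a)) ω

lemma sampled_eq_of_mem_Ioc (f : ℝ → Ω → ℝ) {a s : ℝ} {j : ℤ}
    (hs : s ∈ Ioc (a + j * h) (a + (j + 1) * h)) : sampled hh f a s = f (a + j * h) := by
  have hmod : toIocMod hh 0 (s - a) = s - a - j * h :=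
    (toIocMod_eq_iff hh).2 ⟨⟨by linarith [hs.1], by linarith [hs.2]⟩, j, by simp⟩
  ext ω
  rw [sampled, hmod]
  congr 1
  ring

lemma measurable_sampled (hf : Measurable (Function.uncurry f)) (a : ℝ) :
    Measurable (Function.uncurry (sampled hh f a)) := by
  have hmod := measurable_toIocMod hh 0
  unfold sampled
  fun_prop

lemma adapted_sampled (hf : Adapted F f) (a : ℝ) : Adapted F (sampled hh f a) := fun s =>
  hf.measurable_le (sub_le_self s (left_lt_toIocMod hh 0 (s - a)).le)

lemma lintegral_sq_sub_sampled [SFinite P] (hf : Measurable (Function.uncurry f)) :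
    ∫⁻ a in Ioc 0 h, ∫⁻ ω, ∫⁻ s, ENNReal.ofReal ((f s ω - sampled hh f a s ω) ^ 2) ∂volume ∂P =
      ∫⁻ r in Ioc 0 h, ∫⁻ ω, ∫⁻ s, ENNReal.ofReal ((f s ω - f (s - r) ω) ^ 2) ∂volume ∂P := by
  have hmod := measurable_toIocMod hh 0
  let G (s r : ℝ) : ℝ≥0∞ := ∫⁻ ω, ENNReal.ofReal ((f s ω - f (s - r) ω) ^ 2) ∂P
  have hG : Measurable (Function.uncurry G) :=
    Measurable.lintegral_prod_right' (f := fun q : (ℝ × ℝ) × Ω =>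
      ENNReal.ofReal ((f q.1.1 q.2 - f (q.1.1 - q.1.2) q.2) ^ 2)) (by fun_prop)
  calc ∫⁻ a in Ioc 0 h, ∫⁻ ω, ∫⁻ s, ENNReal.ofReal ((f s ω - sampled hh f a s ω) ^ 2) ∂volume ∂P
      = ∫⁻ a in Ioc 0 h, ∫⁻ s, G s (toIocMod hh 0 (s - a)) :=
        lintegral_congr fun a => lintegral_lintegral_swap (by unfold sampled; fun_prop)
    _ = ∫⁻ r in Ioc 0 h, ∫⁻ s, G s r := lintegral_lintegral_toIocMod_sub hh hG
    _ = ∫⁻ r in Ioc 0 h, ∫⁻ ω, ∫⁻ s, ENNReal.ofReal ((f s ω - f (s - r) ω) ^ 2) ∂volume ∂P :=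
        lintegral_congr fun r => lintegral_lintegral_swap (by fun_prop)

lemma exists_offset_lintegral_sq_sub_sampled_le [SFinite P] (hf : Measurable (Function.uncurry f))
    {C : ℝ≥0∞} (hC : ∀ r ∈ Ioc 0 h,
      ∫⁻ ω, ∫⁻ s, ENNReal.ofReal ((f s ω - f (s - r) ω) ^ 2) ∂volume ∂P ≤ C) :
    ∃ a ∈ Ioo 0 h,
      ∫⁻ ω, ∫⁻ s, ENNReal.ofReal ((f s ω - sampled hh f a s ω) ^ 2) ∂volume ∂P ≤ C := by
  have hmod := measurable_toIocMod hh 0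
  have hvol : volume (Ioo 0 h) = ENNReal.ofReal h := by simp
  have hmeas : Measurable fun a =>
      ∫⁻ ω, ∫⁻ s, ENNReal.ofReal ((f s ω - sampled hh f a s ω) ^ 2) ∂volume ∂P := by
    unfold sampled
    exact Measurable.lintegral_prod_right' (f := fun q : ℝ × Ω => ∫⁻ s, ENNReal.ofReal
        ((f s q.2 - f (s - toIocMod hh 0 (s - q.1)) q.2) ^ 2))
      (Measurable.lintegral_prod_right' (f := fun q : (ℝ × Ω) × ℝ => ENNReal.ofReal
        ((f q.2 q.1.2 - f (q.2 - toIocMod hh 0 (q.2 - q.1.1)) q.1.2) ^ 2)) (by fun_prop))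
  obtain ⟨a, ha, hle⟩ := exists_le_setLAverage (μ := volume) (s := Ioo 0 h)
    (by simpa [hvol] using hh) (by simp [hvol]) hmeas.aemeasurable
  refine ⟨a, ha, hle.trans ?_⟩
  rw [setLAverage_eq, hvol, restrict_Ioo_eq_restrict_Ioc, lintegral_sq_sub_sampled hh hf]
  refine ENNReal.div_le_of_le_mul ((setLIntegral_mono measurable_const hC).trans_eq ?_)
  simp

lemma exists_lintegral_sq_sub_sampled_le [SFinite P] (hf : Measurable (Function.uncurry f))
    (hfin : ∫⁻ ω, ∫⁻ s, ENNReal.ofReal (f s ω ^ 2) ∂volume ∂P ≠ ∞) {ε : ℝ≥0∞} (hε : 0 < ε) :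
    ∃ (h : ℝ) (hh : 0 < h), ∃ a ∈ Ioo 0 h,
      ∫⁻ ω, ∫⁻ s, ENNReal.ofReal ((f s ω - sampled hh f a s ω) ^ 2) ∂volume ∂P ≤ ε := by
  obtain ⟨δ, hδ, hball⟩ := Metric.eventually_nhds_iff.1
    ((tendsto_lintegral_sq_sub_translate hf hfin).eventually (ge_mem_nhds hε))
  have hh : 0 < δ / 2 := half_pos hδ
  refine ⟨δ / 2, hh, exists_offset_lintegral_sq_sub_sampled_le hh hf fun r hr => hball ?_⟩
  simpa [abs_of_pos hr.1] using hr.2.trans_lt (half_lt_self hδ)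

end Sampling

section Simple

lemma sum_indicator_Ioc_succ {α M : Type*} [LinearOrder α] [AddCommMonoid M] {t : ℕ → α} {n : ℕ}
    (ht : ∀ i < n, t i ≤ t (i + 1)) (φ : α → M) (s : α) :
    ∑ i ∈ Finset.range n, (Ioc (t i) (t (i + 1))).indicator φ s =
      (Ioc (t 0) (t n)).indicator φ s := by
  suffices h : t 0 ≤ t n ∧ ∑ i ∈ Finset.range n, (Ioc (t i) (t (i + 1))).indicator φ s =
      (Ioc (t 0) (t n)).indicator φ s from h.2
  induction n with
  | zero => simp
  | succ n ih =>
    obtain ⟨h0n, hsum⟩ := ih fun i hi => ht i (hi.trans n.lt_succ_self)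
    have hn := ht n n.lt_succ_self
    refine ⟨h0n.trans hn, ?_⟩
    rw [Finset.sum_range_succ, hsum, ← Ioc_union_Ioc_eq_Ioc h0n hn,
      indicator_union_of_disjoint (Ioc_disjoint_Ioc_of_le le_rfl)]

lemma isSimpleWith_of_eq_on_cells {n : ℕ} {t : ℕ → ℝ} (ht0 : t 0 = 0)
    (ht : ∀ i < n, t i < t (i + 1)) (hmeas : ∀ i < n, Measurable[F (t i)] (b (t (i + 1))))
    (hcell : ∀ i < n, ∀ s ∈ Ioc (t i) (t (i + 1)), b s = b (t (i + 1)))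
    (hout : ∀ s ∉ Ioc 0 (t n), b s = 0) : IsSimpleWith F b n t := by
  have hb0 : b 0 = 0 := hout 0 fun h => h.1.false
  refine ⟨ht0, ht, hb0 ▸ @measurable_zero _ _ _ (F 0) _, hmeas, fun s ω => ?_⟩
  have hsum : ∑ i ∈ Finset.range n,
      (Ioc (t i) (t (i + 1))).indicator (fun _ => b (t (i + 1)) ω) s =
        ∑ i ∈ Finset.range n, (Ioc (t i) (t (i + 1))).indicator (fun s => b s ω) s := by
    refine Finset.sum_congr rfl fun i hi => congrFun (indicator_congr fun r hr => ?_) s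
    rw [hcell i (Finset.mem_range.1 hi) r hr]
  rw [hsum, sum_indicator_Ioc_succ fun i hi => (ht i hi).le, ht0]
  by_cases hs : s ∈ Ioc 0 (t n)
  · simp [hb0, indicator_of_mem hs]
  · simp [hb0, indicator_of_notMem hs, hout s hs]

/-- The points of the grid `a + hℤ` clamped to `[0, T]`, starting from `a - h`. For `0 < a < h` and
a suitable number of points this is a partition of `[0, T]` whose cells are those of the grid
intersected with `(0, T]`. -/
noncomputable def clampedGrid (h a T : ℝ) (i : ℕ) : ℝ :=
  max 0 (min (a + (i - 1) * h) T)

lemma isSimpleWith_indicator_sampled {h a T : ℝ} (hh : 0 < h) (ha : a ∈ Ioo 0 h) (hT0 : 0 < T)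
    (hf : Adapted F f) {n : ℕ} (hn : a + (n - 1) * h < T) (hTn : T ≤ a + n * h) :
    IsSimpleWith F ((Ioc 0 T).indicator (sampled hh f a)) (n + 1) (clampedGrid h a T) := by
  have hnode {i : ℕ} (hi : i < n + 1) : a + (i - 1) * h < T := by
    have : (i : ℝ) ≤ n := by exact_mod_cast Nat.lt_succ_iff.1 hi
    nlinarith
  have hleft {i : ℕ} (hi : i < n + 1) : clampedGrid h a T i = max 0 (a + (i - 1) * h) := by
    rw [clampedGrid, min_eq_left (hnode hi).le]
  have hright (i : ℕ) : clampedGrid h a T (i + 1) = min (a + i * h) T := by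
    have : 0 < a + i * h := add_pos_of_pos_of_nonneg ha.1 (by positivity)
    rw [clampedGrid, Nat.cast_succ, add_sub_cancel_right, max_eq_right (le_min this.le hT0.le)]
  have hlt {i : ℕ} (hi : i < n + 1) : clampedGrid h a T i < clampedGrid h a T (i + 1) := by
    rw [hleft hi, hright]
    have : 0 < a + i * h := add_pos_of_pos_of_nonneg ha.1 (by positivity)
    exact max_lt (lt_min this hT0) (lt_min (by linarith) (hnode hi))
  have hvalue {i : ℕ} (hi : i < n + 1) {s : ℝ}
      (hs : s ∈ Ioc (clampedGrid h a T i) (clampedGrid h a T (i + 1))) :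
      (Ioc 0 T).indicator (sampled hh f a) s = f (a + (i - 1) * h) := by
    rw [hleft hi, hright, mem_Ioc, max_lt_iff, le_min_iff] at hs
    obtain ⟨⟨hs0, hsl⟩, hsr, hsT⟩ := hs
    have hcell := sampled_eq_of_mem_Ioc hh f (a := a) (s := s) (j := i - 1)
    push_cast at hcell
    rw [sub_add_cancel] at hcell
    rw [indicator_of_mem (mem_Ioc.2 ⟨hs0, hsT⟩), hcell ⟨hsl, hsr⟩]
  refine isSimpleWith_of_eq_on_cells ?_ (fun i => hlt) (fun i hi => ?_) (fun i hi s hs => ?_) ?_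
  · rw [hleft n.succ_pos]
    simp [ha.2.le]
  · rw [hvalue hi (right_mem_Ioc.2 (hlt hi)), hleft hi]
    exact hf.measurable_le (le_max_right _ _)
  · rw [hvalue hi hs, hvalue hi (right_mem_Ioc.2 (hlt hi))]
  · intro s hs
    rw [hright, min_eq_right hTn] at hs
    exact indicator_of_notMem hs _

lemma exists_isSimpleWith_indicator_sampled {h a T : ℝ} (hh : 0 < h) (ha : a ∈ Ioo 0 h)
    (hT : 0 < T) (hf : Adapted F f) :
    ∃ n t, IsSimpleWith F ((Ioc 0 T).indicator (sampled hh f a)) n t ∧ t n ≤ T := by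
  have hlower : -1 < (T - a) / h := (lt_div_iff₀ hh).2 (by linarith [ha.2])
  have hn := (lt_div_iff₀ hh).1 (sub_lt_iff_lt_add.2 (Nat.ceil_lt_add_one_of_gt_neg_one hlower))
  have hTn := (div_le_iff₀ hh).1 (Nat.le_ceil ((T - a) / h))
  exact ⟨_, _, isSimpleWith_indicator_sampled hh ha hT hf (by linarith) (by linarith),
    max_le hT.le (min_le_right _ _)⟩

end Simple

section Density

lemma MemH2.exists_simple_lintegral_sq_sub_le [SFinite P] (hf : MemH2 P F f) {T : ℝ} (hT : 0 < T)
    {ε : ℝ≥0∞} (hε0 : 0 < ε) (hε : ε < ∞) :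
    ∃ g, MemH2 P F g ∧ (∃ n t, IsSimpleWith F g n t ∧ t n ≤ T) ∧
      ∫⁻ ω, ∫⁻ s in Ioc 0 T, ENNReal.ofReal ((g s ω - f s ω) ^ 2) ∂volume ∂P ≤ ε := by
  set f' := (Ioc 0 T).indicator f
  have hf' : MemH2 P F f' := memH2_indicator hf measurableSet_Ioc
  obtain ⟨h, hh, a, ha, herr⟩ := exists_lintegral_sq_sub_sampled_le (P := P) hf'.1
    (by simpa only [f', lintegral_sq_indicator f measurableSet_Ioc] using (hf.2.2 T hT.le).ne) hε0
  set g := (Ioc 0 T).indicator (sampled hh f' a)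
  have hg {S : Set ℝ} :
      ∫⁻ ω, ∫⁻ s in S, ENNReal.ofReal ((g s ω - f' s ω) ^ 2) ∂volume ∂P ≤ ε := by
    refine (lintegral_mono fun ω => (setLIntegral_le_lintegral _ _).trans
      (lintegral_mono fun s => ENNReal.ofReal_le_ofReal ?_)).trans herr
    by_cases hs : s ∈ Ioc 0 T
    · simp only [g, indicator_of_mem hs, sub_sq_comm, le_refl]
    · simp only [g, f', indicator_of_notMem hs, Pi.zero_apply, sub_zero, zero_pow two_ne_zero,
        sq_nonneg]
  have hg_mem : MemH2 P F g := hf'.of_lintegral_sq_sub_lt_top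
    (measurable_uncurry_indicator (measurable_sampled hh hf'.1 a) measurableSet_Ioc)
    (adapted_indicator (adapted_sampled hh hf'.2.1 a) _) fun t _ => hg.trans_lt hε
  refine ⟨g, hg_mem, exists_isSimpleWith_indicator_sampled hh ha hT hf'.2.1,
    le_of_eq_of_le (lintegral_congr fun ω => ?_) (hg (S := Ioc 0 T))⟩
  refine setLIntegral_congr_fun measurableSet_Ioc fun s hs => ?_
  simp only [f', indicator_of_mem hs]

lemma memH2_truncation [IsFiniteMeasure P] (hb : Measurable (Function.uncurry b))
    (hba : Adapted F b) (A : ℝ) : MemH2 P F fun s => truncation (b s) A :=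
  memH2_of_abs_le (measurable_truncation hb A)
    (fun s => measurable_truncation (hba s) A)
    fun s ω => abs_truncation_le_bound (b s) A ω

/-- Truncating at level `k` and approximating the truncation with mean square error `ε k`, where
`∑ ε k < ∞`, makes the time integrals converge almost surely. -/
lemma MemL2.exists_simple_tendstoInMeasure [IsFiniteMeasure P] (hb : MemL2 P F b) {T : ℝ}
    (hT : 0 < T) :
    ∃ bs : ℕ → ℝ → Ω → ℝ,
      (∀ k, MemH2 P F (bs k) ∧ ∃ n t, IsSimpleWith F (bs k) n t ∧ t n ≤ T) ∧
      TendstoInMeasure P (fun k ω => ∫ s in Ioc 0 T, (b s ω - bs k s ω) ^ 2) atTop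
        fun _ => (0 : ℝ) := by
  obtain ⟨ε, hε0, hεsum⟩ := ENNReal.exists_pos_sum_of_countable one_ne_zero ℕ
  have htrunc (k : ℕ) := memH2_truncation (P := P) hb.1 hb.2.1 (k : ℝ)
  choose bs hbs hsimple herr using fun k => (htrunc k).exists_simple_lintegral_sq_sub_le hT
    (ENNReal.coe_pos.2 (hε0 k)) ENNReal.coe_lt_top
  have hb_meas := hb.1
  have hbs_meas (k : ℕ) := (hbs k).1
  have htrunc_meas (k : ℕ) := (htrunc k).1
  refine ⟨bs, fun k => ⟨hbs k, hsimple k⟩, tendstoInMeasure_of_tendsto_ae (fun k => ?_) ?_⟩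
  · exact (StronglyMeasurable.integral_prod_right (f := fun ω s => (b s ω - bs k s ω) ^ 2)
      (Measurable.stronglyMeasurable (by fun_prop))).aestronglyMeasurable
  have herr_ae := ae_tendsto_zero_of_tsum_lintegral_ne_top
    (fun k => measurable_lintegral_sq ((hbs_meas k).sub (htrunc_meas k))
      (volume.restrict (Ioc 0 T)))
    (((ENNReal.tsum_le_tsum herr).trans_lt hεsum).trans ENNReal.one_lt_top).ne
  filter_upwards [hb.2.2 T hT.le, herr_ae] with ω hω hω_err
  exact tendsto_integral_sq_sub_of_tendsto_truncation (by fun_prop) (fun k => by fun_prop)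
    tendsto_natCast_atTop_atTop hω.ne hω_err

end Density

section Uniqueness

variable {W : ℝ → Ω → ℝ} {I J : (ℝ → Ω → ℝ) → ℝ → Ω → ℝ}

lemma IsStochasticIntegralMap.ae_eq [IsFiniteMeasure P] (hI : IsStochasticIntegralMap P F W I)
    (hJ : IsStochasticIntegralMap P F W J) (hb : MemL2 P F b) {u : ℝ} (hu : 0 < u) :
    I b u =ᵐ[P] J b u := by
  obtain ⟨bs, hbs, hlim⟩ := hb.exists_simple_tendstoInMeasure hu
  have hsimple (k : ℕ) : IsSimpleProcess F (bs k) ∧ MemH2 P F (bs k) :=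
    let ⟨hH, n, t, hS, _⟩ := hbs k
    ⟨⟨n, t, hS⟩, hH⟩
  have hIJ (k : ℕ) : J (bs k) u =ᵐ[P] I (bs k) u := by
    obtain ⟨hH, n, t, hS, ht⟩ := hbs k
    filter_upwards [hI.2.1 _ n t hH.memL2 hS u ht, hJ.2.1 _ n t hH.memL2 hS u ht] with ω hIω hJω
    exact hJω.trans hIω.symm
  exact tendstoInMeasure_ae_unique (hI.2.2 u hu.le b hb bs hsimple hlim)
    ((hJ.2.2 u hu.le b hb bs hsimple hlim).congr_left hIJ)

theorem stochasticIntegralMap_indistinguishable_general [IsFiniteMeasure P]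
    (hI : IsStochasticIntegralMap P F W I) (hJ : IsStochasticIntegralMap P F W J)
    (hb : MemL2 P F b) : ∀ᵐ ω ∂P, ∀ u : ℝ, 0 ≤ u → I b u ω = J b u ω := by
  have h := ae_forall_mem_closure_eq_of_continuous (TopologicalSpace.IsSeparable.of_separableSpace
      (Ioi (0 : ℝ))) (ae_of_all P (hI.1 b hb).2) (ae_of_all P (hJ.1 b hb).2)
    fun u hu => hI.ae_eq hJ hb hu
  simpa only [closure_Ioi, mem_Ici] using h

end Uniqueness

end StochasticIntegral

/-- Uniqueness: two stochastic integral mappings assign indistinguishable processes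
to each `b ∈ L²`. -/
theorem stochasticIntegralMap_indistinguishable
    (P : Measure Ω) [IsProbabilityMeasure P] [P.IsComplete]
    (F : Filtration ℝ mΩ) (hF : AugmentedFiltration P F)
    (W : ℝ → Ω → ℝ) (hW : IsWienerProcess P F W)
    (I J : (ℝ → Ω → ℝ) → ℝ → Ω → ℝ)
    (hI : IsStochasticIntegralMap P F W I) (hJ : IsStochasticIntegralMap P F W J) :
    ∀ b, MemL2 P F b → ∀ᵐ ω ∂P, ∀ u : ℝ, 0 ≤ u → I b u ω = J b u ω := by
  intro b hb
  exact stochasticIntegralMap_indistinguishable_general hI hJ hb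
end

section
/- Every measurable and adapted real-valued stochastic process has a progressively measurable modification; that is, if b is a process on [0,∞) × Ω that is jointly measurable and adapted to the filtration F, then there exists a progressively measurable process b' such that for every t ≥ 0, b'(t) = b(t) almost surely. -/
open MeasureTheory Filter
open scoped NNReal
open scoped Topology ENNReal symmDiff

/-!
Suppose first that every `b t` is integrable. Then `t ↦ [b t] ∈ L¹(P)` is strongly measurable, by a
π-λ argument starting from indicators of rectangles, so its range is separable. Since every set of
times has a countable coinitial subset, there are measurable, countably valued `σₙ` with `σₙ t ≤ t`
and `‖b (σₙ t) - b t‖₁ < 2⁻ⁿ`. Only past times are sampled, and only countably many of them, so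
`(t, ω) ↦ b (σₙ t) ω` is progressive; for each fixed `t` the `L¹` errors are summable, so
`b (σₙ t) → b t` almost surely. The pointwise limit is therefore a progressive modification. Values
in a standard Borel space are reduced to this case by a measurable embedding into `[0, 1]` and a
measurable left inverse of it.
-/

section Selection

variable {T X : Type*} [LinearOrder T] [TopologicalSpace T] [SecondCountableTopology T]

lemma exists_countable_subset_forall_exists_le [ClosedIciTopology T] (A : Set T) :
    ∃ C ⊆ A, C.Countable ∧ ∀ t ∈ A, ∃ s ∈ C, s ≤ t := by
  obtain ⟨D, hD, hDdense⟩ := TopologicalSpace.exists_countable_dense A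
  -- `D` accounts for every non-minimal element of `A`; there is at most one minimal element.
  refine ⟨(↑) '' D ∪ {m ∈ A | ∀ s ∈ A, m ≤ s}, ?_, ?_, fun t ht => ?_⟩
  · exact Set.union_subset (Subtype.coe_image_subset A D) (Set.sep_subset A _)
  · refine (hD.image _).union (Set.Subsingleton.countable ?_)
    exact fun m hm n hn => (hm.2 n hn.1).antisymm (hn.2 m hm.1)
  · by_cases hmin : ∀ s ∈ A, t ≤ s
    · exact ⟨t, .inr ⟨ht, hmin⟩, le_rfl⟩
    · push Not at hmin
      obtain ⟨s, hsA, hst⟩ := hmin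
      obtain ⟨d, hdt, hdD⟩ := hDdense.inter_open_nonempty (Subtype.val ⁻¹' Set.Iio t)
        (isOpen_Iio.preimage continuous_subtype_val) ⟨⟨s, hsA⟩, hst⟩
      exact ⟨d, .inl ⟨d, hdD, rfl⟩, hdt.le⟩

lemma exists_countable_forall_nhds_exists_le [ClosedIciTopology T] [TopologicalSpace X]
    [SecondCountableTopology X] (f : T → X) :
    ∃ S : Set T, S.Countable ∧ ∀ t, ∀ U ∈ 𝓝 (f t), ∃ s ∈ S, s ≤ t ∧ f s ∈ U := by
  choose C hCsub hC hCle using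
    fun V : Set X => exists_countable_subset_forall_exists_le (f ⁻¹' V)
  have hbasis := TopologicalSpace.isBasis_countableBasis X
  refine ⟨⋃ V ∈ TopologicalSpace.countableBasis X, C V,
    (TopologicalSpace.countable_countableBasis X).biUnion fun V _ => hC V, fun t U hU => ?_⟩
  obtain ⟨V, hV, htV, hVU⟩ := hbasis.mem_nhds_iff.1 hU
  obtain ⟨s, hs, hst⟩ := hCle V t htV
  exact ⟨s, Set.mem_biUnion hV hs, hst, hVU (hCsub V hs)⟩

lemma exists_measurable_countable_range_le_edist_lt [OrderClosedTopology T] [MeasurableSpace T]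
    [OpensMeasurableSpace T] [PseudoEMetricSpace X] {f : T → X} (hf : StronglyMeasurable f)
    {ε : ℝ≥0∞} (hε : 0 < ε) :
    ∃ σ : T → T, Measurable σ ∧ (Set.range σ).Countable ∧
      ∀ t, σ t ≤ t ∧ edist (f (σ t)) (f t) < ε := by
  classical
  rcases isEmpty_or_nonempty T with _ | ⟨⟨t₀⟩⟩
  · exact ⟨id, measurable_id, Set.countable_range id, isEmptyElim⟩
  have : SecondCountableTopology (Set.range f) := hf.isSeparable_range.secondCountableTopology
  obtain ⟨S, hS, hSf⟩ := exists_countable_forall_nhds_exists_le (Set.rangeFactorization f)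
  have hnear (t : T) : ∃ s ∈ S, s ≤ t ∧ edist (f s) (f t) < ε :=
    hSf t _ (continuous_subtype_val.continuousAt.preimage_mem_nhds (Metric.eball_mem_nhds (f t) hε))
  obtain ⟨s, rfl⟩ := hS.exists_eq_range ((hnear t₀).imp fun _ h => h.1)
  replace hnear (t : T) : ∃ i, s i ≤ t ∧ edist (f (s i)) (f t) < ε := by
    simpa only [Set.exists_range_iff] using hnear t
  have hmeas (i : ℕ) : MeasurableSet {t | s i ≤ t ∧ edist (f (s i)) (f t) < ε} :=
    measurableSet_Ici.inter <| measurableSet_lt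
      ((continuous_const.edist continuous_id).comp_stronglyMeasurable hf).measurable
      measurable_const
  exact ⟨fun t => s (Nat.find (hnear t)),
    Measurable.of_discrete.comp (measurable_find hnear hmeas),
    (Set.countable_range s).mono (Set.range_comp_subset_range _ s),
    fun t => Nat.find_spec (hnear t)⟩

end Selection

lemma isProgressive_comp_of_countable_range {T Ω E : Type*} [Preorder T] [MeasurableSpace T]
    [MeasurableSingletonClass T] {mΩ : MeasurableSpace Ω} [MeasurableSpace E]
    {F : Filtration T mΩ} {b : T → Ω → E} (hb : Adapted F b) {σ : T → T} (hσ : Measurable σ)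
    (hcount : (Set.range σ).Countable) (hle : ∀ t, σ t ≤ t) :
    IsProgressive F fun t => b (σ t) := by
  intro t B hB
  let _ : MeasurableSpace Ω := F t
  have hpre : (fun p : Set.Iic t × Ω => b (σ p.1) p.2) ⁻¹' B =
      ⋃ s ∈ Set.range σ ∩ Set.Iic t, ((σ ∘ Subtype.val) ⁻¹' {s}) ×ˢ (b s ⁻¹' B) := by
    ext ⟨u, ω⟩
    simpa using fun _ => (hle u).trans u.2
  rw [hpre]
  refine .biUnion (hcount.mono Set.inter_subset_left) fun s hs => ?_
  exact (hσ.comp measurable_subtype_coe (measurableSet_singleton s)).prod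
    (hb.measurable_le hs.2 hB)

section Lp

variable {T Ω E : Type*} [MeasurableSpace T] [MeasurableSpace Ω] {P : Measure Ω}
  [IsFiniteMeasure P] [NormedAddCommGroup E] {p : ℝ≥0∞}

lemma tendsto_measure_biUnion_lt_symmDiff_iUnion {f : ℕ → Set Ω}
    (hf : ∀ n, NullMeasurableSet (f n) P) (hdisj : Pairwise (Function.onFun Disjoint f)) :
    Tendsto (fun n => P ((⋃ i < n, f i) ∆ ⋃ i, f i)) atTop (𝓝 0) := by
  refine tendsto_of_tendsto_of_tendsto_of_le_of_le tendsto_const_nhds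
    (tendsto_measure_biUnion_Ici_zero_of_pairwise_disjoint hf hdisj) (fun _ => zero_le)
    fun n => measure_mono ?_
  rintro ω (⟨hω, hω'⟩ | ⟨hω, hω'⟩)
  · exact absurd (Set.iUnion₂_subset_iUnion _ _ hω) hω'
  · obtain ⟨i, hi⟩ := Set.mem_iUnion.1 hω
    refine Set.mem_biUnion (Set.mem_Ici.2 <| not_lt.1 fun hin => hω' ?_) hi
    exact Set.mem_biUnion hin hi

lemma indicatorConstLp_compl {s : Set Ω} (hs : MeasurableSet s) (c : E) :
    indicatorConstLp p hs.compl (measure_ne_top P _) c =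
      Lp.const p P c - indicatorConstLp p hs (measure_ne_top P s) c := by
  rw [eq_sub_iff_add_eq', ← indicatorConstLp_disjoint_union hs hs.compl _ _ disjoint_compl_right]
  simp only [Set.union_compl_self, indicatorConstLp_univ]

lemma indicatorConstLp_biUnion_lt {f : ℕ → Set Ω} (hf : ∀ n, MeasurableSet (f n))
    (hdisj : Pairwise (Function.onFun Disjoint f)) (c : E) (n : ℕ) :
    indicatorConstLp p (.biUnion (Set.to_countable {i | i < n}) fun i _ => hf i)
      (measure_ne_top P _) c =
      ∑ i ∈ Finset.range n, indicatorConstLp p (hf i) (measure_ne_top P (f i)) c := by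
  induction n with
  | zero => simp
  | succ n ih =>
    have hlt : Disjoint (⋃ i < n, f i) (f n) :=
      Set.disjoint_iUnion₂_left.2 fun i hi => hdisj hi.ne
    simp only [Set.mem_ofPred_eq, Set.biUnion_lt_succ, Finset.sum_range_succ] at ih ⊢
    rw [← ih, ← indicatorConstLp_disjoint_union _ _ _ _ hlt]

variable [Fact (1 ≤ p)]

lemma tendsto_sum_indicatorConstLp (hp : p ≠ ∞) {f : ℕ → Set Ω} (hf : ∀ n, MeasurableSet (f n))
    (hdisj : Pairwise (Function.onFun Disjoint f)) (c : E) :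
    Tendsto (fun n => ∑ i ∈ Finset.range n, indicatorConstLp p (hf i) (measure_ne_top P (f i)) c)
      atTop (𝓝 (indicatorConstLp p (.iUnion hf) (measure_ne_top P _) c)) := by
  simp only [← indicatorConstLp_biUnion_lt hf hdisj]
  exact tendsto_indicatorConstLp_set hp <|
    tendsto_measure_biUnion_lt_symmDiff_iUnion (fun n => (hf n).nullMeasurableSet) hdisj

lemma stronglyMeasurable_indicatorConstLp_prodMk_preimage (hp : p ≠ ∞) {S : Set (T × Ω)}
    (hS : MeasurableSet S) (c : E) :
    StronglyMeasurable fun t : T =>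
      indicatorConstLp p (measurable_prodMk_left hS : MeasurableSet (Prod.mk t ⁻¹' S))
        (measure_ne_top P _) c := by
  induction S, hS using MeasurableSpace.induction_on_inter generateFrom_prod.symm
    isPiSystem_prod with
  | empty => simpa only [Set.preimage_empty, indicatorConstLp_empty] using stronglyMeasurable_const
  | basic S hS =>
    obtain ⟨A, hA, B, hB, rfl⟩ := hS
    convert (stronglyMeasurable_const
      (b := indicatorConstLp p hB (measure_ne_top P B) c)).indicator hA using 2 with t
    by_cases ht : t ∈ A <;> simp [ht]
  | compl S hS ih =>
    simp only [Set.preimage_compl, indicatorConstLp_compl (measurable_prodMk_left hS)]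
    exact stronglyMeasurable_const.sub ih
  | iUnion f hd hf ih =>
    refine stronglyMeasurable_of_tendsto (f := fun n t => ∑ i ∈ Finset.range n, _) atTop
      (fun n => Finset.stronglyMeasurable_fun_sum _ fun i _ => ih i) (tendsto_pi_nhds.2 fun t => ?_)
    simpa only [Set.preimage_iUnion] using tendsto_sum_indicatorConstLp hp
      (fun i => measurable_prodMk_left (hf i)) (fun i j hij => (hd hij).preimage (Prod.mk t)) c

lemma stronglyMeasurable_toLp_simpleFunc (hp : p ≠ ∞) (g : SimpleFunc (T × Ω) E) :
    StronglyMeasurable fun t =>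
      ((g.comp (Prod.mk t) measurable_prodMk_left).memLp_of_isFiniteMeasure p P).toLp := by
  induction g using SimpleFunc.induction with
  | @const c S hS =>
    convert stronglyMeasurable_indicatorConstLp_prodMk_preimage (P := P) hp hS c using 2 with t
    exact MemLp.toLp_congr _ _ (.of_forall fun ω => rfl)
  | @add f g _ hf hg => exact hf.add hg

lemma stronglyMeasurable_toLp (hp : p ≠ ∞) {g : T → Ω → E}
    (hg : StronglyMeasurable (Function.uncurry g)) (hgLp : ∀ t, MemLp (g t) p P) :
    StronglyMeasurable fun t => (hgLp t).toLp := by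
  borelize E
  have : TopologicalSpace.SeparableSpace (Set.range (Function.uncurry g) ∪ {0} : Set E) :=
    hg.separableSpace_range_union_singleton
  let a := SimpleFunc.approxOn _ hg.measurable (Set.range (Function.uncurry g) ∪ {0}) 0 (by simp)
  refine stronglyMeasurable_of_tendsto atTop
    (fun n => stronglyMeasurable_toLp_simpleFunc hp (a n))
    (tendsto_pi_nhds.2 fun t => (Lp.tendsto_Lp_iff_tendsto_eLpNorm'' ..).2 ?_)
  have hgt : Measurable (g t) := hg.measurable.comp measurable_prodMk_left
  refine SimpleFunc.tendsto_approxOn_Lp_eLpNorm hgt (by simp) hp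
    (.of_forall fun ω => subset_closure (.inl ⟨(t, ω), rfl⟩)) ?_
  simpa only [sub_zero] using (hgLp t).2

end Lp

lemma ae_tendsto_of_tsum_lintegral_edist_ne_top {Ω X : Type*} [MeasurableSpace Ω]
    [PseudoEMetricSpace X] {μ : Measure Ω} {f : ℕ → Ω → X} {g : Ω → X}
    (hm : ∀ n, AEMeasurable (fun ω => edist (f n ω) (g ω)) μ)
    (hsum : ∑' n, ∫⁻ ω, edist (f n ω) (g ω) ∂μ ≠ ∞) :
    ∀ᵐ ω ∂μ, Tendsto (fun n => f n ω) atTop (𝓝 (g ω)) := by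
  rw [← lintegral_tsum hm] at hsum
  filter_upwards [ae_lt_top' (.tsum hm) hsum] with ω hω
  exact tendsto_iff_edist_tendsto_0.2 (ENNReal.tendsto_atTop_zero_of_tsum_ne_top hω.ne)

lemma isStronglyProgressive_limUnder {T Ω E ι : Type*} [Preorder T] [MeasurableSpace T]
    {mΩ : MeasurableSpace Ω} [TopologicalSpace E] [Nonempty E]
    [TopologicalSpace.IsCompletelyMetrizableSpace E] {F : Filtration T mΩ} [Countable ι]
    {l : Filter ι} [l.IsCountablyGenerated] {b : ι → T → Ω → E}
    (hb : ∀ i, IsStronglyProgressive F (b i)) :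
    IsStronglyProgressive F fun t ω => limUnder l fun i => b i t ω := by
  intro t
  let _ : MeasurableSpace Ω := F t
  exact StronglyMeasurable.limUnder fun i => hb i t

section Modification

variable {T Ω E : Type*} [LinearOrder T] [TopologicalSpace T] [OrderClosedTopology T]
  [SecondCountableTopology T] [MeasurableSpace T] [OpensMeasurableSpace T]
  {mΩ : MeasurableSpace Ω} [MeasurableSpace E] {F : Filtration T mΩ} {b : T → Ω → E}

lemma exists_isProgressive_modification_of_integrable [NormedAddCommGroup E] [CompleteSpace E]
    [SecondCountableTopology E] [BorelSpace E] {P : Measure Ω} [IsFiniteMeasure P]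
    (hmeas : Measurable (Function.uncurry b)) (hadapted : Adapted F b)
    (hint : ∀ t, Integrable (b t) P) :
    ∃ b' : T → Ω → E, IsProgressive F b' ∧ ∀ t, b' t =ᵐ[P] b t := by
  have hL1 : StronglyMeasurable fun t => (hint t).toL1 (b t) :=
    stronglyMeasurable_toLp ENNReal.one_ne_top hmeas.stronglyMeasurable
      fun t => memLp_one_iff_integrable.2 (hint t)
  choose σ hσ hcount hle hdist using fun n : ℕ =>
    exists_measurable_countable_range_le_edist_lt hL1
      (ENNReal.pow_pos (ENNReal.inv_pos.2 ENNReal.ofNat_ne_top : (0 : ℝ≥0∞) < 2⁻¹) n)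
  refine ⟨fun t ω => limUnder atTop fun n => b (σ n t) ω,
    (isStronglyProgressive_limUnder fun n => ?_).isProgressive, fun t => ?_⟩
  · exact (isProgressive_comp_of_countable_range hadapted (hσ n) (hcount n)
      (hle n)).isStronglyProgressive
  · have hsum : ∑' n, ∫⁻ ω, edist (b (σ n t) ω) (b t ω) ∂P ≠ ∞ := by
      simp only [← Integrable.edist_toL1_toL1 _ _ (hint _) (hint t)]
      refine ne_top_of_le_ne_top ?_ (ENNReal.tsum_le_tsum fun n => (hdist n t).le)
      simp only [ENNReal.tsum_geometric_two, ne_eq, ENNReal.ofNat_ne_top, not_false_eq_true]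
    filter_upwards [ae_tendsto_of_tsum_lintegral_edist_ne_top (fun n =>
      (hadapted.measurable.edist hadapted.measurable).aemeasurable) hsum] with ω hω
    exact hω.limUnder_eq

theorem exists_progMeasurable_modification_general [StandardBorelSpace E]
    (P : Measure Ω) [SFinite P] (hmeas : Measurable (Function.uncurry b))
    (hadapted : Adapted F b) :
    ∃ b' : T → Ω → E, IsProgressive F b' ∧ ∀ t, b' t =ᵐ[P] b t := by
  rcases isEmpty_or_nonempty E with _ | hE
  · exact ⟨b, fun _ => @measurable_of_subsingleton_codomain _ _ (_) _ _ _, fun _ => ae_eq_rfl⟩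
  let φ : E → ℝ := Subtype.val ∘ unitInterval.sigmoid ∘ embeddingReal E
  have hφ : MeasurableEmbedding φ := (MeasurableEmbedding.subtype_coe measurableSet_Icc).comp
    (measurableEmbedding_sigmoid_comp_embeddingReal E)
  have hφ_bound (x : E) : ‖φ x‖ ≤ 1 :=
    (abs_of_nonneg (unitInterval.nonneg _)).trans_le (unitInterval.le_one _)
  have hφ_int (t : T) : Integrable (φ ∘ b t) P.toFinite :=
    .of_bound (hφ.measurable.comp hadapted.measurable).aestronglyMeasurable 1
      (.of_forall fun ω => hφ_bound (b t ω))
  obtain ⟨ψ, hψ, hψφ⟩ := hφ.exists_measurable_extend measurable_id fun _ => hE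
  obtain ⟨c, hc, hcb⟩ := exists_isProgressive_modification_of_integrable
    (b := fun t => φ ∘ b t) (hφ.measurable.comp hmeas)
    (fun t => hφ.measurable.comp (hadapted t)) hφ_int
  refine ⟨fun t ω => ψ (c t ω), fun t => hψ.comp (hc t), fun t => ?_⟩
  filter_upwards [(absolutelyContinuous_toFinite P).ae_le (hcb t)] with ω hω
  rw [hω]
  exact congrFun hψφ (b t ω)

end Modification

/-- Every jointly measurable adapted real-valued process on `[0,∞)` has a
progressively measurable modification. -/
theorem exists_progMeasurable_modification
    {Ω : Type*} {mΩ : MeasurableSpace Ω}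
    (P : Measure Ω) [IsProbabilityMeasure P] [P.IsComplete]
    (F : Filtration ℝ≥0 mΩ)
    (hF : ∀ t : ℝ≥0, ∀ s : Set Ω, MeasurableSet s → P s = 0 → MeasurableSet[F t] s)
    (b : ℝ≥0 → Ω → ℝ)
    (hmeas : Measurable (Function.uncurry b)) (hadapted : Adapted F b) :
    ∃ b' : ℝ≥0 → Ω → ℝ, ProgMeasurable F b' ∧ ∀ t : ℝ≥0, ∀ᵐ ω ∂P, b' t ω = b t ω := by
  obtain ⟨b', hb', hmod⟩ := exists_progMeasurable_modification_general P hmeas hadapted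
  exact ⟨b', hb'.isStronglyProgressive, hmod⟩
end

section
/- Let b ∈ L², let t ≥ 0, and let (b_n) be a sequence of simple processes in H² such that ∫₀ᵗ (b − b_n)² ds → 0 in probability. Then the sequence of elementary stochastic integrals S_n = ∑_{i=1}^{m_n} b_n(t_i^{(n)})(W(t_i^{(n)}) − W(t_{i−1}^{(n)})), formed from representations of b_n with times 0 = t₀^{(n)} < ⋯ < t_{m_n}^{(n)} ≤ t, converges in probability to some random variable. -/
/-!
Convergence in measure is complete: a family that is Cauchy in measure contains a fast Cauchy
sequence, which converges almost surely by Borel–Cantelli, and its limit is the limit of the whole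
family. So it suffices that the elementary integrals of `b_k` and `b_l` are close in probability as
soon as `∫₀ᵘ (b_k - b_l)² ds` is, and this integral is at most
`2 (∫₀ᵘ (b - b_k)² ds + ∫₀ᵘ (b - b_l)² ds)`.

Over a common refinement of the two grids, the difference of the elementary integrals is a
martingale transform with quadratic variation `∫₀ᵘ (b_k - b_l)² ds`. Dropping the coefficients as
soon as the quadratic variation would exceed `δ` leaves a transform whose second moment is at most
`δ` by the Itô isometry, so Chebyshev's inequality gives Lenglart's bound
`P(|S_k - S_l| ≥ ε) ≤ δ / ε² + P(∫₀ᵘ (b_k - b_l)² ds > δ)`.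
The isometry uses only the conditional mean and variance of the increments of `W`.
-/

open MeasureTheory Filter Set

variable {Ω : Type*} {mΩ : MeasurableSpace Ω}

open scoped Topology ENNReal NNReal

/-! ### Convergence in measure -/

section ConvergenceInMeasure

variable {E ι : Type*} {l : Filter ι} {μ : Measure Ω}

/-- `f` is Cauchy in measure along `l`: the distance of two members of the family tends to zero in
measure as their indices tend to `l` independently. -/
def CauchyInMeasure [EDist E] (μ : Measure Ω) (f : ι → Ω → E) (l : Filter ι) : Prop :=
  ∀ ε, 0 < ε → Tendsto (fun p : ι × ι => μ {ω | ε ≤ edist (f p.1 ω) (f p.2 ω)}) (l ×ˢ l) (𝓝 0)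

theorem cauchyInMeasure_iff_tendstoInMeasure_sub [SeminormedAddCommGroup E] {f : ι → Ω → E} :
    CauchyInMeasure μ f l ↔
      TendstoInMeasure μ (fun (p : ι × ι) ω => f p.1 ω - f p.2 ω) (l ×ˢ l) (fun _ => 0) := by
  simp only [CauchyInMeasure, TendstoInMeasure, edist_eq_enorm_sub, sub_zero]

theorem measure_le_of_ae_eventually_mem {A : Set Ω} {B : ℕ → Set Ω} {η : ℝ≥0∞}
    (hAB : ∀ᵐ ω ∂μ, ω ∈ A → ∀ᶠ j in atTop, ω ∈ B j) (hB : ∀ᶠ j in atTop, μ (B j) ≤ η) :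
    μ A ≤ η := by
  have hmono : Monotone fun J => ⋂ j ≥ J, B j := fun J J' hJ =>
    biInter_mono (fun _ hj => hJ.trans hj) fun _ _ => le_rfl
  have hsub : A ≤ᵐ[μ] ⋃ J, ⋂ j ≥ J, B j := by
    filter_upwards [hAB] with ω hω hA
    obtain ⟨J, hJ⟩ := eventually_atTop.1 (hω hA)
    exact mem_iUnion.2 ⟨J, mem_iInter₂.2 hJ⟩
  refine (measure_mono_ae hsub).trans ?_
  rw [hmono.measure_iUnion]
  refine iSup_le fun J => ?_
  obtain ⟨j, hj, hJj⟩ := (hB.and (eventually_ge_atTop J)).exists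
  exact (measure_mono (biInter_subset_of_mem hJj)).trans hj

theorem CauchyInMeasure.exists_seq [EDist E] [l.NeBot] {f : ι → Ω → E}
    (hf : CauchyInMeasure μ f l) :
    ∃ k : ℕ → ι,
      (∀ n, μ {ω | 2⁻¹ ^ n ≤ edist (f (k n) ω) (f (k (n + 1)) ω)} ≤ 2⁻¹ ^ n) ∧
      ∀ n, ∀ᶠ i in l, ∀ j ≥ n, μ {ω | 2⁻¹ ^ n ≤ edist (f i ω) (f (k j) ω)} ≤ 2⁻¹ ^ n := by
  have hpos (n : ℕ) : (0 : ℝ≥0∞) < 2⁻¹ ^ n := ENNReal.pow_pos (by simp) n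
  have hcauchy (n : ℕ) : ∃ A ∈ l, ∀ i ∈ A, ∀ j ∈ A,
      μ {ω | 2⁻¹ ^ n ≤ edist (f i ω) (f j ω)} ≤ 2⁻¹ ^ n :=
    eventually_prod_self_iff.1 <| (hf _ (hpos n)).eventually_le_const (hpos n)
  choose A hAl hA using hcauchy
  -- Points of a decreasing sequence of Cauchy sets form a fast Cauchy sequence even when `l` is not
  -- countably generated and `k` does not tend to `l`.
  have hmem (n : ℕ) : (⋂ i ≤ n, A i) ∈ l :=
    (biInter_mem (finite_le_nat n)).2 fun i _ => hAl i
  choose k hk using fun n => Filter.nonempty_of_mem (hmem n)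
  have hkA {n j : ℕ} (hj : n ≤ j) : k j ∈ A n := mem_iInter₂.1 (hk j) n hj
  exact ⟨k, fun n => hA n _ (hkA le_rfl) _ (hkA n.le_succ),
    fun n => mem_of_superset (hAl n) fun i hi j hj => hA n i hi _ (hkA hj)⟩

theorem ae_exists_tendsto_of_measure_edist_le [PseudoEMetricSpace E] [CompleteSpace E]
    {f : ℕ → Ω → E}
    (hf : ∀ n, μ {ω | 2⁻¹ ^ n ≤ edist (f n ω) (f (n + 1) ω)} ≤ 2⁻¹ ^ n) :
    ∀ᵐ ω ∂μ, ∃ x, Tendsto (fun n => f n ω) atTop (𝓝 x) := by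
  have hsum : ∑' n, μ {ω | 2⁻¹ ^ n ≤ edist (f n ω) (f (n + 1) ω)} ≠ ∞ := by
    refine ne_top_of_le_ne_top ?_ (ENNReal.tsum_le_tsum hf)
    simp [ENNReal.tsum_geometric]
  filter_upwards [ae_eventually_notMem hsum] with ω hω
  obtain ⟨J, hJ⟩ := eventually_atTop.1 hω
  have hstep (n : ℕ) : edist (f (n + J) ω) (f (n + 1 + J) ω) ≤ 1 / 2 ^ n := by
    rw [Nat.add_right_comm, one_div, ENNReal.inv_pow]
    exact (not_le.1 (hJ (n + J) (Nat.le_add_left J n))).le.trans <|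
      pow_le_pow_right_of_le_one' (by simp) (Nat.le_add_right n J)
  obtain ⟨x, hx⟩ := cauchySeq_tendsto_of_complete
    (cauchySeq_of_edist_le_geometric_two 1 ENNReal.one_ne_top hstep)
  exact ⟨x, (tendsto_add_atTop_iff_nat J).1 hx⟩

theorem CauchyInMeasure.exists_tendstoInMeasure [PseudoEMetricSpace E] [CompleteSpace E]
    [l.NeBot] {f : ι → Ω → E} (hf : CauchyInMeasure μ f l)
    (hfm : ∀ i, AEStronglyMeasurable (f i) μ) :
    ∃ g : Ω → E, StronglyMeasurable g ∧ TendstoInMeasure μ f l g := by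
  obtain ⟨k, hk, hkl⟩ := hf.exists_seq
  obtain ⟨g, hg, hlim⟩ := exists_stronglyMeasurable_limit_of_tendsto_ae (fun n => hfm (k n))
    (ae_exists_tendsto_of_measure_edist_le hk)
  refine ⟨g, hg, fun ε hε => ENNReal.tendsto_nhds_zero.2 fun η hη => ?_⟩
  obtain ⟨n, hn⟩ := ENNReal.exists_inv_two_pow_lt (lt_min hε hη).ne'
  obtain ⟨hnε, hnη⟩ := lt_min_iff.1 hn
  filter_upwards [hkl n] with i hi
  refine measure_le_of_ae_eventually_mem (B := fun j => {ω | 2⁻¹ ^ n ≤ edist (f i ω) (f (k j) ω)})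
    ?_ (eventually_atTop.2 ⟨n, fun j hj => (hi j hj).trans hnη.le⟩)
  filter_upwards [hlim] with ω hω hε'
  exact (tendsto_const_nhds.edist hω).eventually_const_le (hnε.trans_le hε')

theorem tendstoInMeasure_zero_of_norm_le_mul_add {E' E'' : Type*} [SeminormedAddCommGroup E]
    [SeminormedAddCommGroup E'] [SeminormedAddCommGroup E'']
    {X : ι → Ω → E} {Y : ι → Ω → E'} {Z : ι → Ω → E''} {C : ℝ} (hC : 0 < C)
    (hX : TendstoInMeasure μ X l fun _ => 0) (hY : TendstoInMeasure μ Y l fun _ => 0)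
    (hZ : ∀ i, ∀ᵐ ω ∂μ, ‖Z i ω‖ ≤ C * (‖X i ω‖ + ‖Y i ω‖)) :
    TendstoInMeasure μ Z l fun _ => 0 := by
  simp only [tendstoInMeasure_iff_norm, sub_zero] at hX hY ⊢
  intro ε hε
  have hε' : 0 < ε / (2 * C) := by positivity
  have hXY := (hX _ hε').add (hY _ hε')
  rw [add_zero] at hXY
  refine tendsto_of_tendsto_of_tendsto_of_le_of_le tendsto_const_nhds hXY
    (fun _ => zero_le) fun i => ?_
  refine (measure_mono_ae ?_).trans (measure_union_le _ _)
  filter_upwards [hZ i] with ω hω (hεZ : ε ≤ ‖Z i ω‖)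
  by_contra hlt
  obtain ⟨hltX, hltY⟩ := not_or.1 hlt
  have hlt : C * (‖X i ω‖ + ‖Y i ω‖) < C * (ε / (2 * C) + ε / (2 * C)) := by
    gcongr <;> exact not_le.1 ‹_›
  refine (hεZ.trans hω).not_gt (hlt.trans_eq ?_)
  field_simp
  norm_num

theorem tendstoInMeasure_zero_of_measureReal_le [IsFiniteMeasure μ]
    {X A : ι → Ω → ℝ} (hA : TendstoInMeasure μ A l fun _ => 0)
    (hXA : ∀ i, ∀ ε > 0, ∀ δ > 0,
      μ.real {ω | ε ≤ |X i ω|} ≤ δ / ε ^ 2 + μ.real {ω | δ < A i ω}) :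
    TendstoInMeasure μ X l fun _ => 0 := by
  simp only [tendstoInMeasure_iff_measureReal_norm, sub_zero, Real.norm_eq_abs] at hA ⊢
  intro ε hε
  refine tendsto_order.2 ⟨fun a ha => Eventually.of_forall fun _ => ha.trans_le measureReal_nonneg,
    fun η hη => ?_⟩
  have hδ : 0 < ε ^ 2 * (η / 2) := by positivity
  filter_upwards [(hA _ hδ).eventually_lt_const (half_pos hη)] with i hi
  calc μ.real {ω | ε ≤ |X i ω|}
      ≤ ε ^ 2 * (η / 2) / ε ^ 2 + μ.real {ω | ε ^ 2 * (η / 2) < A i ω} := hXA i ε hε _ hδ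
    _ ≤ η / 2 + μ.real {ω | ε ^ 2 * (η / 2) ≤ |A i ω|} := by
        rw [mul_div_cancel_left₀ _ (by positivity)]
        exact add_le_add le_rfl <|
          measureReal_mono fun ω (hω : _ < A i ω) => hω.le.trans (le_abs_self _)
    _ < η := by linarith only [hi]

end ConvergenceInMeasure

/-! ### Martingale transforms -/

section MartingaleTransform

/-- The martingale transform `(c • M)ₙ = ∑_{j < n} cⱼ (Mⱼ₊₁ - Mⱼ)`, the discrete-time stochastic
integral of `c` against `M`. -/
def martingaleTransform (c M : ℕ → Ω → ℝ) (n : ℕ) (ω : Ω) : ℝ :=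
  ∑ j ∈ Finset.range n, c j ω * (M (j + 1) ω - M j ω)

variable {P : Measure Ω} {G : Filtration ℕ mΩ} {M c : ℕ → Ω → ℝ} {v : ℕ → ℝ}

theorem martingaleTransform_succ (c M : ℕ → Ω → ℝ) (n : ℕ) :
    martingaleTransform c M (n + 1) = martingaleTransform c M n + c n * (M (n + 1) - M n) :=
  funext fun _ => Finset.sum_range_succ _ n

theorem adapted_martingaleTransform (hc : Adapted G c) (hM : Adapted G M) :
    Adapted G (martingaleTransform c M) := by
  intro n
  refine Finset.measurable_fun_sum _ fun j hj => ?_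
  have hjn := Finset.mem_range.1 hj
  exact ((hc j).mono (G.mono hjn.le) le_rfl).mul <|
    ((hM (j + 1)).mono (G.mono hjn) le_rfl).sub ((hM j).mono (G.mono hjn.le) le_rfl)

theorem memLp_martingaleTransform {p : ℝ≥0∞} (hM : ∀ n, MemLp (M n) p P)
    (hc : ∀ n, MemLp (c n) ∞ P) (n : ℕ) : MemLp (martingaleTransform c M n) p P :=
  memLp_finsetSum _ fun j _ => ((hM (j + 1)).sub (hM j)).mul (hc j)

theorem integral_mul_condExp {m : MeasurableSpace Ω} (hm : m ≤ mΩ) [SigmaFinite (P.trim hm)]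
    {f g : Ω → ℝ} (hf : AEStronglyMeasurable[m] f P) (hfg : Integrable (f * g) P)
    (hg : Integrable g P) : ∫ ω, f ω * (P[g | m]) ω ∂P = ∫ ω, f ω * g ω ∂P :=
  (integral_congr_ae (condExp_mul_of_aestronglyMeasurable_left hf hfg hg)).symm.trans
    (integral_condExp hm)

theorem integral_mul_sub_eq_zero_of_martingale [IsFiniteMeasure P] (hM : Martingale M G P)
    (hM2 : ∀ n, MemLp (M n) 2 P) {n : ℕ} {f : Ω → ℝ} (hf : Measurable[G n] f)
    (hf2 : MemLp f 2 P) : ∫ ω, f ω * (M (n + 1) ω - M n ω) ∂P = 0 := by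
  have hΔ : MemLp (M (n + 1) - M n) 2 P := (hM2 (n + 1)).sub (hM2 n)
  have hzero : P[M (n + 1) - M n | G n] =ᵐ[P] 0 := by
    filter_upwards [condExp_sub (hM.integrable (n + 1)) (hM.integrable n) (G n),
      hM.2 n (n + 1) n.le_succ, hM.2 n n le_rfl] with ω hsub hsucc hself
    simp [hsub, hsucc, hself]
  calc ∫ ω, f ω * (M (n + 1) ω - M n ω) ∂P
      = ∫ ω, f ω * (P[M (n + 1) - M n | G n]) ω ∂P :=
        (integral_mul_condExp (G.le n) hf.aestronglyMeasurable (hf2.integrable_mul hΔ)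
          (hΔ.integrable one_le_two)).symm
    _ = 0 := integral_eq_zero_of_ae (by filter_upwards [hzero] with ω hω; simp [hω])

theorem integral_sq_mul_sub_sq [IsFiniteMeasure P] (hM2 : ∀ n, MemLp (M n) 2 P) {n : ℕ} {a : ℝ}
    (hv : P[(M (n + 1) - M n) ^ 2 | G n] =ᵐ[P] fun _ => a)
    {f : Ω → ℝ} (hf : Measurable[G n] f) (hfb : MemLp f ∞ P) :
    ∫ ω, (f ω * (M (n + 1) ω - M n ω)) ^ 2 ∂P = ∫ ω, f ω ^ 2 * a ∂P := by
  have hΔ : MemLp (M (n + 1) - M n) 2 P := (hM2 (n + 1)).sub (hM2 n)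
  have hprod : Integrable (f ^ 2 * (M (n + 1) - M n) ^ 2) P := by
    rw [← mul_pow]
    exact (hΔ.mul hfb).integrable_sq
  calc ∫ ω, (f ω * (M (n + 1) ω - M n ω)) ^ 2 ∂P
      = ∫ ω, f ω ^ 2 * (P[(M (n + 1) - M n) ^ 2 | G n]) ω ∂P := by
        simp only [mul_pow]
        exact (integral_mul_condExp (G.le n) (hf.pow_const 2).aestronglyMeasurable hprod
          hΔ.integrable_sq).symm
    _ = ∫ ω, f ω ^ 2 * a ∂P :=
        integral_congr_ae (by filter_upwards [hv] with ω hω; rw [hω])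

theorem integral_martingaleTransform_sq [IsFiniteMeasure P] (hM : Martingale M G P)
    (hM2 : ∀ n, MemLp (M n) 2 P) (hv : ∀ n, P[(M (n + 1) - M n) ^ 2 | G n] =ᵐ[P] fun _ => v n)
    (hc : Adapted G c) (hcb : ∀ n, MemLp (c n) ∞ P) (n : ℕ) :
    ∫ ω, martingaleTransform c M n ω ^ 2 ∂P =
      ∫ ω, ∑ j ∈ Finset.range n, c j ω ^ 2 * v j ∂P := by
  have hsq (j : ℕ) : Integrable (fun ω => c j ω ^ 2 * v j) P :=
    ((hcb j).mono_exponent le_top).integrable_sq.mul_const _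
  induction n with
  | zero => simp [martingaleTransform]
  | succ n ih =>
    have hX : MemLp (martingaleTransform c M n) 2 P := memLp_martingaleTransform hM2 hcb n
    have hY : MemLp (fun ω => c n ω * (M (n + 1) ω - M n ω)) 2 P :=
      ((hM2 (n + 1)).sub (hM2 n)).mul (hcb n)
    have hXc : MemLp (martingaleTransform c M n * c n) 2 P := (hcb n).mul hX
    have hXY : Integrable
        (fun ω => martingaleTransform c M n ω * (c n ω * (M (n + 1) ω - M n ω))) P :=
      hX.integrable_mul hY
    have hsum : Integrable (fun ω => martingaleTransform c M n ω ^ 2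
        + (c n ω * (M (n + 1) ω - M n ω)) ^ 2) P := hX.integrable_sq.add hY.integrable_sq
    have hcross : ∫ ω, martingaleTransform c M n ω * (c n ω * (M (n + 1) ω - M n ω)) ∂P = 0 := by
      simpa only [Pi.mul_apply, mul_assoc] using integral_mul_sub_eq_zero_of_martingale hM hM2
        ((adapted_martingaleTransform hc hM.stronglyAdapted.adapted n).mul (hc n)) hXc
    simp only [Finset.sum_range_succ]
    rw [integral_add (integrable_finsetSum _ fun j _ => hsq j) (hsq n), ← ih,
      ← integral_sq_mul_sub_sq hM2 (hv n) (hc n) (hcb n)]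
    calc ∫ ω, martingaleTransform c M (n + 1) ω ^ 2 ∂P
        = ∫ ω, (martingaleTransform c M n ω ^ 2 + (c n ω * (M (n + 1) ω - M n ω)) ^ 2
            + 2 * (martingaleTransform c M n ω * (c n ω * (M (n + 1) ω - M n ω)))) ∂P := by
          simp only [martingaleTransform_succ, Pi.add_apply, Pi.mul_apply, Pi.sub_apply]
          congr with ω
          ring
      _ = _ := by
          rw [integral_add hsum (hXY.const_mul 2), integral_add hX.integrable_sq hY.integrable_sq,
            integral_const_mul, hcross, mul_zero, add_zero]

/-- The sequence `a`, with `a j` replaced by `0` as soon as the sum `∑_{i ≤ j} aᵢ² vᵢ` exceeds `δ`.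
The `j`-th term is included in the sum, so that the truncated sequence stays within the budget. -/
noncomputable def truncateAtBudget (v : ℕ → ℝ) (δ : ℝ) (a : ℕ → ℝ) (j : ℕ) : ℝ :=
  if ∑ i ∈ Finset.range (j + 1), a i ^ 2 * v i ≤ δ then a j else 0

theorem sum_truncateAtBudget_sq_le {δ : ℝ} (hv : 0 ≤ v) (hδ : 0 ≤ δ) (a : ℕ → ℝ) (n : ℕ) :
    ∑ j ∈ Finset.range n, truncateAtBudget v δ a j ^ 2 * v j ≤ δ := by
  induction n with
  | zero => simpa using hδ
  | succ n ih =>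
    by_cases h : ∑ i ∈ Finset.range (n + 1), a i ^ 2 * v i ≤ δ
    · refine (Finset.sum_le_sum fun j _ => ?_).trans h
      refine mul_le_mul_of_nonneg_right ?_ (hv j)
      unfold truncateAtBudget
      split_ifs
      · exact le_rfl
      · simpa using sq_nonneg (a j)
    · rw [Finset.sum_range_succ]
      simpa [truncateAtBudget, h] using ih

theorem truncateAtBudget_eq_self {δ : ℝ} (hv : 0 ≤ v) {a : ℕ → ℝ} {n : ℕ}
    (h : ∑ i ∈ Finset.range n, a i ^ 2 * v i ≤ δ) {j : ℕ} (hj : j < n) :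
    truncateAtBudget v δ a j = a j :=
  if_pos <| h.trans' <| Finset.sum_le_sum_of_subset_of_nonneg (Finset.range_mono hj)
    fun i _ _ => mul_nonneg (sq_nonneg _) (hv i)

theorem abs_truncateAtBudget_le {δ : ℝ} (hv : ∀ j, 0 < v j) (hδ : 0 ≤ δ) (a : ℕ → ℝ) (j : ℕ) :
    |truncateAtBudget v δ a j| ≤ √(δ / v j) := by
  refine Real.abs_le_sqrt ((le_div_iff₀ (hv j)).2 ?_)
  refine le_trans ?_ (sum_truncateAtBudget_sq_le (fun i => (hv i).le) hδ a (j + 1))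
  exact Finset.single_le_sum (f := fun i => truncateAtBudget v δ a i ^ 2 * v i)
    (fun i _ => mul_nonneg (sq_nonneg _) (hv i).le) (Finset.self_mem_range_succ j)

theorem adapted_truncateAtBudget (hc : Adapted G c) (v : ℕ → ℝ) (δ : ℝ) :
    Adapted G fun j ω => truncateAtBudget v δ (fun i => c i ω) j := by
  intro j
  have hsum : Measurable[G j] fun ω => ∑ i ∈ Finset.range (j + 1), c i ω ^ 2 * v i :=
    Finset.measurable_fun_sum _ fun i hi =>
      (((hc i).mono (G.mono (Finset.mem_range_succ_iff.1 hi)) le_rfl).pow_const 2).mul_const _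
  exact Measurable.ite (hsum measurableSet_Iic) (hc j) measurable_const

theorem memLp_top_truncateAtBudget (hc : Adapted G c) (hv0 : ∀ j, 0 < v j) {δ : ℝ} (hδ : 0 ≤ δ)
    (j : ℕ) : MemLp (fun ω => truncateAtBudget v δ (fun i => c i ω) j) ∞ P :=
  memLp_top_of_bound
    ((adapted_truncateAtBudget hc v δ j).mono (G.le j) le_rfl).aestronglyMeasurable _
    (ae_of_all P fun ω => abs_truncateAtBudget_le hv0 hδ (fun i => c i ω) j)

theorem integral_martingaleTransform_truncateAtBudget_sq_le [IsProbabilityMeasure P]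
    (hM : Martingale M G P) (hM2 : ∀ n, MemLp (M n) 2 P)
    (hv : ∀ n, P[(M (n + 1) - M n) ^ 2 | G n] =ᵐ[P] fun _ => v n) (hv0 : ∀ n, 0 < v n)
    (hc : Adapted G c) (n : ℕ) {δ : ℝ} (hδ : 0 ≤ δ) :
    ∫ ω, martingaleTransform (fun j ω => truncateAtBudget v δ (fun i => c i ω) j) M n ω ^ 2 ∂P
      ≤ δ := by
  have hv0' : 0 ≤ v := fun j => (hv0 j).le
  rw [integral_martingaleTransform_sq hM hM2 hv (adapted_truncateAtBudget hc v δ)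
    (memLp_top_truncateAtBudget hc hv0 hδ)]
  simpa using integral_mono_of_nonneg
    (ae_of_all P fun ω => Finset.sum_nonneg fun j _ => mul_nonneg (sq_nonneg _) (hv0' j))
    (integrable_const δ)
    (ae_of_all P fun ω => sum_truncateAtBudget_sq_le hv0' hδ (fun i => c i ω) n)

theorem measureReal_le_abs_le_integral_sq_div {X : Ω → ℝ} (hX : MemLp X 2 P) {ε : ℝ}
    (hε : 0 < ε) :
    P.real {ω | ε ≤ |X ω|} ≤ (∫ ω, X ω ^ 2 ∂P) / ε ^ 2 := by
  have hset : {ω | ε ≤ |X ω|} = {ω | ε ^ 2 ≤ X ω ^ 2} := by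
    ext ω
    simp only [mem_ofPred_eq, sq_le_sq, abs_of_pos hε]
  rw [hset, le_div_iff₀' (by positivity)]
  exact mul_meas_ge_le_integral_of_nonneg (ae_of_all P fun ω => sq_nonneg (X ω))
    hX.integrable_sq _

theorem measureReal_le_abs_martingaleTransform_le [IsProbabilityMeasure P]
    (hM : Martingale M G P) (hM2 : ∀ n, MemLp (M n) 2 P)
    (hv : ∀ n, P[(M (n + 1) - M n) ^ 2 | G n] =ᵐ[P] fun _ => v n) (hv0 : ∀ n, 0 < v n)
    (hc : Adapted G c) (n : ℕ) {ε δ : ℝ} (hε : 0 < ε) (hδ : 0 ≤ δ) :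
    P.real {ω | ε ≤ |martingaleTransform c M n ω|} ≤
      δ / ε ^ 2 + P.real {ω | δ < ∑ j ∈ Finset.range n, c j ω ^ 2 * v j} := by
  let c' : ℕ → Ω → ℝ := fun j ω => truncateAtBudget v δ (fun i => c i ω) j
  have hsubset : {ω | ε ≤ |martingaleTransform c M n ω|} ⊆
      {ω | ε ≤ |martingaleTransform c' M n ω|} ∪
        {ω | δ < ∑ j ∈ Finset.range n, c j ω ^ 2 * v j} := by
    intro ω hω
    refine or_iff_not_imp_right.2 fun hbudget => ?_
    have heq : martingaleTransform c' M n ω = martingaleTransform c M n ω :=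
      Finset.sum_congr rfl fun j hj => congrArg (· * _)
        (truncateAtBudget_eq_self (fun i => (hv0 i).le) (not_lt.1 hbudget) (Finset.mem_range.1 hj))
    simpa only [mem_ofPred_eq, heq] using hω
  calc P.real {ω | ε ≤ |martingaleTransform c M n ω|}
      ≤ P.real {ω | ε ≤ |martingaleTransform c' M n ω|}
          + P.real {ω | δ < ∑ j ∈ Finset.range n, c j ω ^ 2 * v j} :=
        (measureReal_mono hsubset).trans (measureReal_union_le _ _)
    _ ≤ _ := by
        gcongr
        refine (measureReal_le_abs_le_integral_sq_div (memLp_martingaleTransform hM2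
          (memLp_top_truncateAtBudget hc hv0 hδ) n) hε).trans ?_
        gcongr
        exact integral_martingaleTransform_truncateAtBudget_sq_le hM hM2 hv hv0 hc n hδ

end MartingaleTransform

/-! ### Normal martingales -/

section NormalMartingale

variable {P : Measure Ω} {F : Filtration ℝ mΩ} {W : ℝ → Ω → ℝ}

/-- `W` is a normal martingale on `[0, ∞)`: a square integrable martingale with predictable
quadratic variation `⟨W⟩ₜ = t`. Both martingale properties are expressed through the conditional
moments of the increments; nothing but adaptedness is asked at negative times. -/
structure IsNormalMartingale (P : Measure Ω) (F : Filtration ℝ mΩ) (W : ℝ → Ω → ℝ) : Prop where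
  adapted : Adapted F W
  memLp_two {t : ℝ} : 0 ≤ t → MemLp (W t) 2 P
  condExp_sub {s t : ℝ} : 0 ≤ s → s ≤ t → P[W t - W s | F s] =ᵐ[P] 0
  condExp_sub_sq {s t : ℝ} : 0 ≤ s → s ≤ t → P[(W t - W s) ^ 2 | F s] =ᵐ[P] fun _ => t - s

theorem memLp_of_map_eq_gaussianReal {X : Ω → ℝ} (hX : AEMeasurable X P) {m : ℝ} {v : ℝ≥0}
    (h : P.map X = ProbabilityTheory.gaussianReal m v) {p : ℝ≥0∞} (hp : p ≠ ∞) : MemLp X p P := by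
  have hid := ProbabilityTheory.memLp_id_gaussianReal' (μ := m) (v := v) p hp
  rw [← h] at hid
  exact (memLp_map_measure_iff aestronglyMeasurable_id hX).1 hid

theorem integral_of_map_eq_gaussianReal {X : Ω → ℝ} (hX : AEMeasurable X P) {m : ℝ} {v : ℝ≥0}
    (h : P.map X = ProbabilityTheory.gaussianReal m v) : ∫ ω, X ω ∂P = m := by
  rw [← ProbabilityTheory.integral_id_gaussianReal (μ := m) (v := v), ← h,
    integral_map hX (by fun_prop)]

theorem integral_sq_of_map_eq_gaussianReal {X : Ω → ℝ} (hX : AEMeasurable X P) {v : ℝ≥0}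
    (h : P.map X = ProbabilityTheory.gaussianReal 0 v) : ∫ ω, X ω ^ 2 ∂P = v := by
  rw [← ProbabilityTheory.variance_of_integral_eq_zero hX (integral_of_map_eq_gaussianReal hX h),
    ← ProbabilityTheory.variance_id_gaussianReal (μ := 0) (v := v), ← h,
    ProbabilityTheory.variance_id_map hX]

theorem IsWienerProcess.isNormalMartingale [IsProbabilityMeasure P] (hW : IsWienerProcess P F W) :
    IsNormalMartingale P F W := by
  obtain ⟨-, hW0, hadapted, hincrement⟩ := hW
  have hmeas (t : ℝ) : Measurable (W t) := (hadapted t).mono (F.le t) le_rfl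
  have hsub (s t : ℝ) : Measurable (W t - W s) := (hmeas t).sub (hmeas s)
  have hcomap (s t : ℝ) :
      StronglyMeasurable[MeasurableSpace.comap (W t - W s) inferInstance] (W t - W s) :=
    (comap_measurable (W t - W s)).stronglyMeasurable
  refine ⟨hadapted, fun {t} ht => ?_, fun {s t} hs hst => ?_, fun {s t} hs hst => ?_⟩
  · have hmem := memLp_of_map_eq_gaussianReal (hsub 0 t).aemeasurable (hincrement 0 t le_rfl ht).2
      ENNReal.ofNat_ne_top (p := 2)
    rwa [show W 0 = 0 from funext hW0, sub_zero] at hmem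
  · obtain ⟨hindep, hlaw⟩ := hincrement s t hs hst
    refine (condExp_indep_eq (hsub s t).comap_le (F.le s) (hcomap s t)
      hindep).trans (ae_of_all P fun _ => ?_)
    exact integral_of_map_eq_gaussianReal (hsub s t).aemeasurable hlaw
  · obtain ⟨hindep, hlaw⟩ := hincrement s t hs hst
    refine (condExp_indep_eq (hsub s t).comap_le (F.le s) ((hcomap s t).pow 2)
      hindep).trans (ae_of_all P fun _ => ?_)
    exact (integral_sq_of_map_eq_gaussianReal (hsub s t).aemeasurable hlaw).trans
      (Real.coe_toNNReal _ (sub_nonneg.2 hst))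

/-- The discrete filtration obtained by observing `F` along the nondecreasing times `r j`. -/
def sampledFiltration (F : Filtration ℝ mΩ) {r : ℕ → ℝ} (hr : Monotone r) : Filtration ℕ mΩ where
  seq j := F (r j)
  mono' _ _ hij := F.mono (hr hij)
  le' j := F.le (r j)

theorem IsNormalMartingale.martingale_sampled [IsFiniteMeasure P] (hW : IsNormalMartingale P F W)
    {r : ℕ → ℝ} (hr : Monotone r) (hr0 : 0 ≤ r 0) :
    Martingale (fun j => W (r j)) (sampledFiltration F hr) P :=
  martingale_of_condExp_sub_eq_zero_nat (fun j => (hW.adapted (r j)).stronglyMeasurable)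
    (fun j => (hW.memLp_two (hr0.trans (hr j.zero_le))).integrable one_le_two)
    fun j => hW.condExp_sub (hr0.trans (hr j.zero_le)) (hr j.le_succ)

theorem IsNormalMartingale.measureReal_le_abs_martingaleTransform_sampled_le
    [IsProbabilityMeasure P] (hW : IsNormalMartingale P F W) {r : ℕ → ℝ} (hr : StrictMono r)
    (hr0 : 0 ≤ r 0) {c : ℕ → Ω → ℝ} (hc : ∀ j, Measurable[F (r j)] (c j)) (n : ℕ) {ε δ : ℝ}
    (hε : 0 < ε) (hδ : 0 ≤ δ) :
    P.real {ω | ε ≤ |martingaleTransform c (fun j => W (r j)) n ω|} ≤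
      δ / ε ^ 2 + P.real {ω | δ < ∑ j ∈ Finset.range n, c j ω ^ 2 * (r (j + 1) - r j)} := by
  have hpos (j : ℕ) : 0 ≤ r j := hr0.trans (hr.monotone j.zero_le)
  exact measureReal_le_abs_martingaleTransform_le (hW.martingale_sampled hr.monotone hr0)
    (fun j => hW.memLp_two (hpos j))
    (fun j => hW.condExp_sub_sq (hpos j) (hr.monotone j.le_succ))
    (fun j => sub_pos.2 (hr j.lt_succ_self)) hc n hε hδ

end NormalMartingale

/-! ### Grids -/

section Grid

theorem exists_mem_Ioc_succ {α : Type*} [LinearOrder α] {t : ℕ → α} {n : ℕ} {s : α}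
    (h0 : t 0 < s) (hn : s ≤ t n) : ∃ i < n, s ∈ Ioc (t i) (t (i + 1)) := by
  induction n with
  | zero => exact absurd hn h0.not_ge
  | succ n ih =>
    rcases le_or_gt s (t n) with hs | hs
    · obtain ⟨i, hi, hsi⟩ := ih hs
      exact ⟨i, hi.trans n.lt_succ_self, hsi⟩
    · exact ⟨n, n.lt_succ_self, hs, hn⟩

section SumIndicator

variable {α E : Type*} [LinearOrder α] [AddCommMonoid E] {t : ℕ → α} {n : ℕ}

theorem sum_indicator_Ioc_succ_of_mem (ht : MonotoneOn t (Iic n)) (f : ℕ → E) {i : ℕ} (hi : i < n)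
    {s : α} (hs : s ∈ Ioc (t i) (t (i + 1))) :
    ∑ j ∈ Finset.range n, (Ioc (t j) (t (j + 1))).indicator (fun _ => f j) s = f i := by
  rw [Finset.sum_eq_single_of_mem i (Finset.mem_range.2 hi) fun j hj hji =>
    indicator_of_notMem ?_ _, indicator_of_mem hs]
  have hj := Finset.mem_range.1 hj
  rintro ⟨hjs, hsj⟩
  rcases hji.lt_or_gt with hji | hij
  · exact (hs.1.trans_le hsj).not_ge (ht hj hi.le hji)
  · exact (hjs.trans_le hs.2).not_ge (ht hi hj.le hij)

theorem sum_indicator_Ioc_succ_of_notMem (ht : MonotoneOn t (Iic n)) (f : ℕ → E) {s : α}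
    (hs : s ∉ Ioc (t 0) (t n)) :
    ∑ j ∈ Finset.range n, (Ioc (t j) (t (j + 1))).indicator (fun _ => f j) s = 0 := by
  refine Finset.sum_eq_zero fun i hi => indicator_of_notMem (notMem_subset ?_ hs) _
  have hi := Finset.mem_range.1 hi
  exact Ioc_subset_Ioc (ht n.zero_le hi.le i.zero_le) (ht hi self_mem_Iic hi)

end SumIndicator

theorem exists_strictMono_image_Iio_card_eq {α : Type*} [LinearOrder α] [NoMaxOrder α] [Nonempty α]
    (T : Finset α) : ∃ r : ℕ → α, StrictMono r ∧ r '' Iio T.card = T := by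
  induction T using Finset.induction_on_max with
  | empty =>
    obtain ⟨r, hr⟩ := Nat.exists_strictMono α
    exact ⟨r, hr, by simp⟩
  | insert a T hmax ih =>
    obtain ⟨r, hr, hrT⟩ := ih
    obtain ⟨q, hq, rfl⟩ := Nat.exists_strictMono' a
    have hr_lt {i : ℕ} (hi : i < T.card) : r i < q 0 :=
      hmax _ (Finset.mem_coe.1 (hrT ▸ mem_image_of_mem r hi))
    refine ⟨fun j => if j < T.card then r j else q (j - T.card), fun i j hij => ?_, ?_⟩
    · dsimp only
      split_ifs with hi hj hj
      · exact hr hij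
      · exact (hr_lt hi).trans_le (hq.monotone (Nat.zero_le _))
      · exact absurd (hij.trans hj) hi
      · exact hq (by omega)
    · rw [Finset.card_insert_of_notMem fun h => (hmax _ h).false, ← Order.succ_eq_add_one,
        Order.Iio_succ_eq_insert, image_insert_eq, Finset.coe_insert, ← hrT]
      simp only [lt_irrefl, if_false, Nat.sub_self]
      exact congrArg _ (image_congr fun j hj => if_pos hj)

theorem exists_strictMono_zero_subset_range {T : Finset ℝ} (hT : ∀ x ∈ T, 0 ≤ x) :
    ∃ r : ℕ → ℝ, StrictMono r ∧ r 0 = 0 ∧ ↑T ⊆ range r := by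
  obtain ⟨r, hr, hrT⟩ := exists_strictMono_image_Iio_card_eq (insert 0 T)
  have hsub : ↑(insert 0 T) ⊆ range r := hrT ▸ image_subset_range _ _
  obtain ⟨k, hk⟩ := hsub (Finset.mem_insert_self 0 T)
  have hr0 : r 0 ∈ insert 0 T :=
    Finset.mem_coe.1 (hrT ▸ mem_image_of_mem r (Finset.card_pos.2 (Finset.insert_nonempty 0 T)))
  refine ⟨r, hr, le_antisymm (hk ▸ hr.monotone k.zero_le) ?_, fun x hx =>
    hsub (Finset.mem_insert_of_mem hx)⟩
  exact (Finset.mem_insert.1 hr0).elim Eq.ge (hT _)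

theorem integral_Ioc_eq_sum_of_eqOn_const {E : Type*} [NormedAddCommGroup E] [NormedSpace ℝ E]
    [CompleteSpace E] {f : ℝ → E} {r : ℕ → ℝ} (hr : Monotone r) {n : ℕ}
    (hf : ∀ i < n, EqOn f (fun _ => f (r (i + 1))) (Ioc (r i) (r (i + 1)))) :
    ∫ s in Ioc (r 0) (r n), f s = ∑ i ∈ Finset.range n, (r (i + 1) - r i) • f (r (i + 1)) := by
  have hle (i : ℕ) : r i ≤ r (i + 1) := hr i.le_succ
  rw [← intervalIntegral.integral_of_le (hr n.zero_le),
    ← intervalIntegral.sum_integral_adjacent_intervals fun i hi =>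
      (intervalIntegrable_iff_integrableOn_Ioc_of_le (hle i)).2 <|
        (integrableOn_const measure_Ioc_lt_top.ne).congr_fun (hf i hi).symm measurableSet_Ioc]
  refine Finset.sum_congr rfl fun i hi => ?_
  rw [intervalIntegral.integral_of_le (hle i),
    setIntegral_congr_fun measurableSet_Ioc (hf i (Finset.mem_range.1 hi)), setIntegral_const,
    Real.volume_real_Ioc_of_le (hle i)]

end Grid

/-! ### Simple processes -/

section SimpleProcess

variable {F : Filtration ℝ mΩ} {W b b' : ℝ → Ω → ℝ} {n : ℕ} {t r : ℕ → ℝ}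

theorem elemInt_eq_add_mul {k l : ℕ} (hkl : k ≤ l) {ω : Ω} {a : ℝ}
    (ha : ∀ j ∈ Finset.Ico k l, b (r (j + 1)) ω = a) :
    ElemInt W b l r ω = ElemInt W b k r ω + a * (W (r l) ω - W (r k) ω) := by
  simp only [ElemInt]
  rw [← Finset.sum_range_add_sum_Ico _ hkl, ← Finset.sum_Ico_sub (fun j => W (r j) ω) hkl,
    Finset.mul_sum]
  exact congrArg _ (Finset.sum_congr rfl fun j hj => by rw [ha j hj])

theorem elemInt_sub (W b b' : ℝ → Ω → ℝ) (n : ℕ) (t : ℕ → ℝ) :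
    ElemInt W (b - b') n t = ElemInt W b n t - ElemInt W b' n t := by
  funext ω
  simp only [ElemInt, Pi.sub_apply, sub_mul, Finset.sum_sub_distrib]

namespace IsSimpleWith

theorem strictMonoOn (h : IsSimpleWith F b n t) : StrictMonoOn t (Iic n) :=
  strictMonoOn_of_lt_succ ordConnected_Iic fun i _ _ hi => h.2.1 i hi

theorem nonneg (h : IsSimpleWith F b n t) {i : ℕ} (hi : i ≤ n) : 0 ≤ t i :=
  h.1.symm.trans_le (h.strictMonoOn.monotoneOn n.zero_le hi i.zero_le)

theorem apply_of_mem_Ioc (h : IsSimpleWith F b n t) {i : ℕ} (hi : i < n) {s : ℝ}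
    (hs : s ∈ Ioc (t i) (t (i + 1))) : b s = b (t (i + 1)) := by
  have hs0 : s ∉ ({0} : Set ℝ) := ((h.nonneg hi.le).trans_lt hs.1).ne'
  funext ω
  rw [h.2.2.2.2 s ω, indicator_of_notMem hs0, zero_add,
    sum_indicator_Ioc_succ_of_mem h.strictMonoOn.monotoneOn (fun i => b (t (i + 1)) ω) hi hs]

theorem apply_of_notMem (h : IsSimpleWith F b n t) {s : ℝ} (hs : s ∉ Icc 0 (t n)) : b s = 0 := by
  have hs0 : s ∉ ({0} : Set ℝ) := fun hs0 => hs (hs0.symm ▸ ⟨le_rfl, h.nonneg le_rfl⟩)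
  funext ω
  rw [h.2.2.2.2 s ω, indicator_of_notMem hs0, zero_add,
    sum_indicator_Ioc_succ_of_notMem h.strictMonoOn.monotoneOn (fun i => b (t (i + 1)) ω)
      (h.1 ▸ notMem_subset Ioc_subset_Icc_self hs)]
  rfl

theorem of_apply_eq (ht0 : t 0 = 0) (ht : StrictMonoOn t (Iic n)) (hb0 : Measurable[F 0] (b 0))
    (hbm : ∀ i < n, Measurable[F (t i)] (b (t (i + 1))))
    (hconst : ∀ i < n, ∀ s ∈ Ioc (t i) (t (i + 1)), b s = b (t (i + 1)))
    (hzero : ∀ s ∉ Icc 0 (t n), b s = 0) : IsSimpleWith F b n t := by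
  refine ⟨ht0, fun i hi => ht hi.le hi i.lt_succ_self, hb0, hbm, fun s ω => ?_⟩
  by_cases hs : s ∈ Ioc (t 0) (t n)
  · obtain ⟨i, hi, hsi⟩ := exists_mem_Ioc_succ hs.1 hs.2
    have hs0 : s ∉ ({0} : Set ℝ) := (ht0 ▸ hs.1).ne'
    rw [indicator_of_notMem hs0, zero_add, sum_indicator_Ioc_succ_of_mem ht.monotoneOn
      (fun i => b (t (i + 1)) ω) hi hsi, hconst i hi s hsi]
  · rw [sum_indicator_Ioc_succ_of_notMem ht.monotoneOn (fun i => b (t (i + 1)) ω) hs, add_zero]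
    by_cases hs0 : s = 0
    · simp [hs0]
    · have hs' : s ∉ Icc 0 (t n) := fun h => hs ⟨ht0 ▸ h.1.lt_of_ne' hs0, h.2⟩
      simp [hs0, hzero s hs']

theorem refine_grid (h : IsSimpleWith F b n t) (hr : StrictMono r) (hr0 : r 0 = 0)
    (htr : ∀ i ≤ n, t i ∈ range r) {N : ℕ} (hN : t n ≤ r N) : IsSimpleWith F b N r := by
  have hsucc {i j : ℕ} (hi : i ≤ n) (hij : t i < r (j + 1)) : t i ≤ r j := by
    obtain ⟨k, hk⟩ := htr i hi
    rw [← hk] at hij ⊢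
    exact hr.monotone (Nat.lt_succ_iff.1 (hr.lt_iff_lt.1 hij))
  have hcell (j : ℕ) : t n ≤ r j ∨ ∃ i < n, Ioc (r j) (r (j + 1)) ⊆ Ioc (t i) (t (i + 1)) := by
    refine or_iff_not_imp_left.2 fun hj => ?_
    have hjn : r (j + 1) ≤ t n := not_lt.1 (mt (hsucc le_rfl) hj)
    have hpos : t 0 < r (j + 1) := by
      rw [h.1, ← hr0]
      exact hr j.succ_pos
    obtain ⟨i, hi, hij⟩ := exists_mem_Ioc_succ hpos hjn
    exact ⟨i, hi, Ioc_subset_Ioc (hsucc hi.le hij.1) hij.2⟩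
  have hlast (j : ℕ) : r (j + 1) ∈ Ioc (r j) (r (j + 1)) := right_mem_Ioc.2 (hr j.lt_succ_self)
  have hbeyond {j : ℕ} (hj : t n ≤ r j) {s : ℝ} (hs : s ∈ Ioc (r j) (r (j + 1))) : b s = 0 :=
    h.apply_of_notMem fun hs' => (hj.trans_lt hs.1).not_ge hs'.2
  refine of_apply_eq hr0 (hr.strictMonoOn _) h.2.2.1 (fun j _ => ?_) (fun j _ s hs => ?_)
    fun s hs => h.apply_of_notMem (notMem_subset (Icc_subset_Icc_right hN) hs)
  · rcases hcell j with hj | ⟨i, hi, hij⟩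
    · rw [hbeyond hj (hlast j)]
      exact measurable_const
    · rw [h.apply_of_mem_Ioc hi (hij (hlast j))]
      exact (h.2.2.2.1 i hi).mono (F.mono (hsucc hi.le (hij (hlast j)).1)) le_rfl
  · rcases hcell j with hj | ⟨i, hi, hij⟩
    · rw [hbeyond hj hs, hbeyond hj (hlast j)]
    · rw [h.apply_of_mem_Ioc hi (hij hs), h.apply_of_mem_Ioc hi (hij (hlast j))]

theorem sub (h : IsSimpleWith F b n t) (h' : IsSimpleWith F b' n t) :
    IsSimpleWith F (b - b') n t := by
  refine of_apply_eq h.1 h.strictMonoOn (h.2.2.1.sub h'.2.2.1)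
    (fun i hi => (h.2.2.2.1 i hi).sub (h'.2.2.2.1 i hi)) (fun i hi s hs => ?_) fun s hs => ?_
  · simp only [Pi.sub_apply, h.apply_of_mem_Ioc hi hs, h'.apply_of_mem_Ioc hi hs]
  · simp only [Pi.sub_apply, h.apply_of_notMem hs, h'.apply_of_notMem hs, sub_self]

theorem memLp_path (h : IsSimpleWith F b n t) (p : ℝ≥0∞) (μ : Measure ℝ) [IsFiniteMeasure μ]
    (ω : Ω) : MemLp (fun s => b s ω) p μ := by
  have heq : (fun s => b s ω) = fun s => indicator {0} (fun _ => b 0 ω) s +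
      ∑ i ∈ Finset.range n, indicator (Ioc (t i) (t (i + 1))) (fun _ => b (t (i + 1)) ω) s :=
    funext fun s => h.2.2.2.2 s ω
  rw [heq]
  refine MemLp.add ((memLp_const _).indicator (measurableSet_singleton 0)) ?_
  exact memLp_finsetSum _ fun i _ => (memLp_const _).indicator measurableSet_Ioc

theorem integral_sq_eq_sum (h : IsSimpleWith F b n r) (hr : Monotone r) (ω : Ω) :
    ∫ s in Ioc 0 (r n), b s ω ^ 2 =
      ∑ j ∈ Finset.range n, b (r (j + 1)) ω ^ 2 * (r (j + 1) - r j) := by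
  have hconst (j : ℕ) (hj : j < n) : EqOn (fun s => b s ω ^ 2) (fun _ => b (r (j + 1)) ω ^ 2)
      (Ioc (r j) (r (j + 1))) := fun s hs => by simp only [h.apply_of_mem_Ioc hj hs]
  simpa only [h.1, smul_eq_mul, mul_comm] using integral_Ioc_eq_sum_of_eqOn_const hr hconst

theorem measurable_elemInt (h : IsSimpleWith F b n t) (hW : ∀ s, Measurable (W s)) :
    Measurable (ElemInt W b n t) :=
  Finset.measurable_fun_sum _ fun i hi =>
    ((h.2.2.2.1 i (Finset.mem_range.1 hi)).mono (F.le _) le_rfl).mul ((hW _).sub (hW _))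

theorem elemInt_refine_grid (h : IsSimpleWith F b n t) (W : ℝ → Ω → ℝ) (hr : StrictMono r)
    (hr0 : r 0 = 0) (htr : ∀ i ≤ n, t i ∈ range r) {N : ℕ} (hN : t n ≤ r N) :
    ElemInt W b N r = ElemInt W b n t := by
  choose! φ hφ using htr
  have hφ_lt {i j : ℕ} (hi : i ≤ n) : φ i < j ↔ t i < r j := by rw [← hφ i hi, hr.lt_iff_lt]
  have hblock (i : ℕ) (hi : i ≤ n) : ElemInt W b (φ i) r = ElemInt W b i t := by
    induction i with
    | zero =>
      have hφ0 : φ 0 = 0 := hr.injective (by rw [hφ 0 hi, h.1, hr0])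
      rw [hφ0]
      rfl
    | succ i ih =>
      have hle : φ i ≤ φ (i + 1) := ((hφ_lt (by omega)).2 (by rw [hφ _ hi]; exact h.2.1 i hi)).le
      funext ω
      rw [elemInt_eq_add_mul (a := b (t (i + 1)) ω) hle fun j hj => ?_, ih (by omega),
        hφ _ hi, hφ i (by omega)]
      · exact (Finset.sum_range_succ _ i).symm
      · refine congrFun (h.apply_of_mem_Ioc hi ⟨?_, ?_⟩) ω
        · exact (hφ_lt (by omega)).1 (Nat.lt_succ_of_le (Finset.mem_Ico.1 hj).1)
        · exact hφ _ hi ▸ hr.monotone (Finset.mem_Ico.1 hj).2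
  have hφN : φ n ≤ N := hr.le_iff_le.1 ((hφ n le_rfl).trans_le hN)
  rw [← hblock n le_rfl]
  funext ω
  rw [elemInt_eq_add_mul (a := 0) hφN fun j hj => ?_, zero_mul, add_zero]
  refine congrFun (h.apply_of_notMem fun hs => hs.2.not_gt ?_) ω
  exact (hφ_lt le_rfl).1 (Nat.lt_succ_of_le (Finset.mem_Ico.1 hj).1)

end IsSimpleWith

end SimpleProcess

/-! ### Convergence of elementary integrals -/

section ElementaryIntegral

variable {P : Measure Ω} {F : Filtration ℝ mΩ} {W b b' : ℝ → Ω → ℝ} {n n' : ℕ} {t t' r : ℕ → ℝ}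
  {u ε δ : ℝ}

theorem IsNormalMartingale.measureReal_le_abs_elemInt_le [IsProbabilityMeasure P]
    (hW : IsNormalMartingale P F W) (h : IsSimpleWith F b n r) (hr : StrictMono r)
    (hε : 0 < ε) (hδ : 0 ≤ δ) :
    P.real {ω | ε ≤ |ElemInt W b n r ω|} ≤
      δ / ε ^ 2 + P.real {ω | δ < ∫ s in Ioc 0 (r n), b s ω ^ 2} := by
  have hmeas (j : ℕ) : Measurable[F (r j)] (b (r (j + 1))) := by
    rcases lt_or_ge j n with hj | hj
    · exact h.2.2.2.1 j hj
    · rw [h.apply_of_notMem fun hs => hs.2.not_gt (hr (Nat.lt_succ_of_le hj))]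
      exact measurable_const
  simp only [h.integral_sq_eq_sum hr.monotone]
  exact hW.measureReal_le_abs_martingaleTransform_sampled_le hr h.1.ge hmeas n hε hδ

theorem IsNormalMartingale.measureReal_le_abs_elemInt_sub_le [IsProbabilityMeasure P]
    (hW : IsNormalMartingale P F W) (h : IsSimpleWith F b n t) (h' : IsSimpleWith F b' n' t')
    (hu : t n ≤ u) (hu' : t' n' ≤ u) (hε : 0 < ε) (hδ : 0 ≤ δ) :
    P.real {ω | ε ≤ |ElemInt W b n t ω - ElemInt W b' n' t' ω|} ≤
      δ / ε ^ 2 + P.real {ω | δ < ∫ s in Ioc 0 u, (b s ω - b' s ω) ^ 2} := by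
  let T : Finset ℝ :=
    {u} ∪ (Finset.range (n + 1)).image t ∪ (Finset.range (n' + 1)).image t'
  have hT : ∀ x ∈ T, 0 ≤ x := by
    simp only [T, Finset.mem_union, Finset.mem_singleton, Finset.mem_image,
      Finset.mem_range_succ_iff]
    rintro _ ((rfl | ⟨i, hi, rfl⟩) | ⟨i, hi, rfl⟩)
    exacts [(h.nonneg le_rfl).trans hu, h.nonneg hi, h'.nonneg hi]
  obtain ⟨r, hr, hr0, hTr⟩ := exists_strictMono_zero_subset_range hT
  obtain ⟨N, rfl⟩ : u ∈ range r := hTr (by simp [T])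
  have htr (i : ℕ) (hi : i ≤ n) : t i ∈ range r :=
    hTr <| Finset.mem_union_left _ <| Finset.mem_union_right _ <|
      Finset.mem_image_of_mem t (Finset.mem_range_succ_iff.2 hi)
  have htr' (i : ℕ) (hi : i ≤ n') : t' i ∈ range r :=
    hTr <| Finset.mem_union_right _ <|
      Finset.mem_image_of_mem t' (Finset.mem_range_succ_iff.2 hi)
  have hsub : IsSimpleWith F (b - b') N r :=
    (h.refine_grid hr hr0 htr hu).sub (h'.refine_grid hr hr0 htr' hu')
  simpa only [elemInt_sub, h.elemInt_refine_grid W hr hr0 htr hu,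
    h'.elemInt_refine_grid W hr hr0 htr' hu', Pi.sub_apply] using
    hW.measureReal_le_abs_elemInt_le hsub hr hε hδ

theorem MemL2.ae_memLp_path (hb : MemL2 P F b) (hu : 0 ≤ u) :
    ∀ᵐ ω ∂P, MemLp (fun s => b s ω) 2 (volume.restrict (Ioc 0 u)) := by
  filter_upwards [hb.2.2 u hu] with ω hω
  have hmeas : Measurable fun s => b s ω := hb.1.of_uncurry_right
  refine (memLp_two_iff_integrable_sq hmeas.aestronglyMeasurable).2
    ⟨(hmeas.pow_const 2).aestronglyMeasurable, ?_⟩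
  exact (hasFiniteIntegral_iff_ofReal (ae_of_all _ fun s => sq_nonneg _)).2 hω

theorem integral_sub_sq_le {α : Type*} [MeasurableSpace α] {μ : Measure α} {f g h : α → ℝ}
    (hf : MemLp f 2 μ) (hg : MemLp g 2 μ) (hh : MemLp h 2 μ) :
    ∫ x, (g x - h x) ^ 2 ∂μ ≤ 2 * (∫ x, (f x - g x) ^ 2 ∂μ + ∫ x, (f x - h x) ^ 2 ∂μ) := by
  have hfg : Integrable (fun x => (f x - g x) ^ 2) μ := (hf.sub hg).integrable_sq
  have hfh : Integrable (fun x => (f x - h x) ^ 2) μ := (hf.sub hh).integrable_sq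
  rw [← integral_add hfg hfh, ← integral_const_mul]
  refine integral_mono (hg.sub hh).integrable_sq ((hfg.add hfh).const_mul 2) fun x => ?_
  calc (g x - h x) ^ 2 = ((f x - h x) - (f x - g x)) ^ 2 := by ring
    _ ≤ 2 * ((f x - g x) ^ 2 + (f x - h x) ^ 2) := by
        nlinarith [sq_nonneg ((f x - h x) + (f x - g x))]

theorem cauchyInMeasure_elemInt {ι : Type*} {l : Filter ι} [IsProbabilityMeasure P]
    (hW : IsNormalMartingale P F W)
    (hb : ∀ᵐ ω ∂P, MemLp (fun s => b s ω) 2 (volume.restrict (Ioc 0 u)))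
    {bs : ι → ℝ → Ω → ℝ} {m : ι → ℕ} {τ : ι → ℕ → ℝ}
    (hsimple : ∀ k, IsSimpleWith F (bs k) (m k) (τ k)) (hle : ∀ k, τ k (m k) ≤ u)
    (happrox : TendstoInMeasure P
      (fun k ω => ∫ s in Ioc (0 : ℝ) u, (b s ω - bs k s ω) ^ 2) l fun _ => 0) :
    CauchyInMeasure P (fun k => ElemInt W (bs k) (m k) (τ k)) l := by
  have hdist : TendstoInMeasure P
      (fun (p : ι × ι) ω => ∫ s in Ioc 0 u, (bs p.1 s ω - bs p.2 s ω) ^ 2) (l ×ˢ l)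
      fun _ => 0 := by
    refine tendstoInMeasure_zero_of_norm_le_mul_add two_pos (happrox.comp tendsto_fst)
      (happrox.comp tendsto_snd) fun p => ?_
    filter_upwards [hb] with ω hω
    simpa only [Function.comp_apply, Real.norm_of_nonneg (integral_nonneg fun _ => sq_nonneg _)]
      using integral_sub_sq_le hω ((hsimple p.1).memLp_path 2 _ ω) ((hsimple p.2).memLp_path 2 _ ω)
  exact cauchyInMeasure_iff_tendstoInMeasure_sub.2 <|
    tendstoInMeasure_zero_of_measureReal_le hdist fun p ε hε δ hδ =>
      hW.measureReal_le_abs_elemInt_sub_le (hsimple p.1) (hsimple p.2) (hle p.1) (hle p.2) hε hδ.le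

theorem elemInt_tendstoInMeasure_general {ι : Type*} {l : Filter ι} [l.NeBot]
    [IsProbabilityMeasure P] (hW : IsNormalMartingale P F W)
    (hb : ∀ᵐ ω ∂P, MemLp (fun s => b s ω) 2 (volume.restrict (Ioc 0 u)))
    {bs : ι → ℝ → Ω → ℝ} {m : ι → ℕ} {τ : ι → ℕ → ℝ}
    (hsimple : ∀ k, IsSimpleWith F (bs k) (m k) (τ k)) (hle : ∀ k, τ k (m k) ≤ u)
    (happrox : TendstoInMeasure P
      (fun k ω => ∫ s in Ioc (0 : ℝ) u, (b s ω - bs k s ω) ^ 2) l fun _ => 0) :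
    ∃ X : Ω → ℝ, Measurable X ∧
      TendstoInMeasure P (fun k => ElemInt W (bs k) (m k) (τ k)) l X := by
  have hWm (s : ℝ) : Measurable (W s) := (hW.adapted s).mono (F.le s) le_rfl
  have hcauchy := cauchyInMeasure_elemInt hW hb hsimple hle happrox
  obtain ⟨X, hX, hlim⟩ := hcauchy.exists_tendstoInMeasure fun k =>
    ((hsimple k).measurable_elemInt hWm).aestronglyMeasurable
  exact ⟨X, hX.measurable, hlim⟩

end ElementaryIntegral

/-- If simple `H²` processes `bs k` with grids contained in `[0, u]` approximate
`b ∈ L²` in the sense that `∫₀ᵘ (b − bs k)² ds → 0` in probability, then their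
elementary stochastic integrals converge in probability to some random variable. -/
theorem elemInt_tendstoInMeasure
    (P : Measure Ω) [IsProbabilityMeasure P] [P.IsComplete]
    (F : Filtration ℝ mΩ) (hF : AugmentedFiltration P F)
    (W : ℝ → Ω → ℝ) (hW : IsWienerProcess P F W)
    (b : ℝ → Ω → ℝ) (hb : MemL2 P F b) (u : ℝ) (hu : 0 ≤ u)
    (bs : ℕ → ℝ → Ω → ℝ) (m : ℕ → ℕ) (τ : ℕ → ℕ → ℝ)
    (hsimple : ∀ k, IsSimpleWith F (bs k) (m k) (τ k))
    (hH2 : ∀ k, MemH2 P F (bs k))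
    (hle : ∀ k, τ k (m k) ≤ u)
    (happrox : TendstoInMeasure P
      (fun k ω => ∫ s in Set.Ioc (0 : ℝ) u, (b s ω - bs k s ω) ^ 2) atTop
      (fun _ => (0 : ℝ))) :
    ∃ X : Ω → ℝ, Measurable X ∧
      TendstoInMeasure P (fun k => ElemInt W (bs k) (m k) (τ k)) atTop X :=
  elemInt_tendstoInMeasure_general hW.isNormalMartingale (hb.ae_memLp_path hu) hsimple hle happrox
end
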